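/- For every integer n ≥ 1: (i) for every x ∈ Ω_n one has ω_n(x) ∈ Ω_n; (ii) Ω_n = {σ^k(ω_n(x)) : x ∈ Ω_n, k ∈ ℤ^2}, i.e. the substitution ω_n is onto up to a shift and the Wang shift Ω_n is self-similar; and (iii) ω_n is recognizable in Ω_n: if x, x' ∈ Ω_n and k, k' ∈ ℤ^2 satisfy σ^k(ω_n(x)) = σ^{k'}(ω_n(x')), where coordinatewise 0 ≤ k < (width of ω_n(x(0,0)), height of ω_n(x(0,0))) and 0 ≤ k' < (width of ω_n(x'(0,0)), height of ω_n(x'(0,0))), then x = x' and k = k'. -/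

import Mathlib

structure WangTile (C : Type*) where
  right : C
  top : C
  left : C
  bottom : C
deriving DecidableEq

abbrev Lbl : Type := ℤ × ℤ × ℤ

def Vn (n : ℤ) : Set Lbl :=
  {v | 0 ≤ v.1 ∧ v.1 ≤ v.2.1 ∧ v.2.1 ≤ 1 ∧ v.2.1 ≤ v.2.2 ∧ v.2.2 ≤ n + 1}

def hatT {C : Type*} (t : WangTile C) : WangTile C :=
  ⟨t.top, t.right, t.bottom, t.left⟩

def whiteTiles (n : ℤ) : Set (WangTile Lbl) :=
  {t | ∃ i j : ℤ, 1 ≤ i ∧ i ≤ n ∧ 1 ≤ j ∧ j ≤ n ∧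
    t = ⟨(1, 1, i + 1), (1, 1, j + 1), (1, 1, i), (1, 1, j)⟩}

def blueH (n : ℤ) : Set (WangTile Lbl) :=
  {t | ∃ i : ℤ, 0 ≤ i ∧ i ≤ n ∧ t = ⟨(0, 0, i + 1), (1, 1, 1), (0, 0, i), (1, 1, n)⟩}

def greenH (n : ℤ) : Set (WangTile Lbl) :=
  {t | ∃ i : ℤ, 0 ≤ i ∧ i ≤ n ∧ t = ⟨(0, 1, i + 1), (1, 1, 1), (0, 0, i), (1, 1, n + 1)⟩}

def yellowH (n : ℤ) : Set (WangTile Lbl) :=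
  {t | ∃ i : ℤ, 1 ≤ i ∧ i ≤ n ∧ t = ⟨(0, 1, i + 1), (1, 1, 2), (0, 1, i), (1, 1, n + 1)⟩}

def antiH (n : ℤ) : Set (WangTile Lbl) :=
  {t | ∃ i : ℤ, 1 ≤ i ∧ i ≤ n ∧ t = ⟨(0, 0, i + 1), (1, 1, 2), (0, 1, i), (1, 1, n)⟩}

def junctionTile (n k l r s : ℤ) : WangTile Lbl :=
  ⟨(0, k, l), (0, r, s), (0, s, r + n), (0, l, k + n)⟩

def jPairs : Set (ℤ × ℤ) := {(0, 0), (0, 1), (1, 1)}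

def junctions (n : ℤ) : Set (WangTile Lbl) :=
  {t | ∃ k l r s : ℤ, (k, l) ∈ jPairs ∧ (r, s) ∈ jPairs ∧ t = junctionTile n k l r s}

def Text (n : ℤ) : Set (WangTile Lbl) :=
  whiteTiles n ∪ blueH n ∪ greenH n ∪ yellowH n ∪ antiH n ∪
    hatT '' blueH n ∪ hatT '' greenH n ∪ hatT '' yellowH n ∪ hatT '' antiH n ∪ junctions n

def Dset (n : ℤ) : Set (WangTile Lbl) :=
  {(⟨(0, 0, n + 1), (1, 1, 1), (0, 0, n), (1, 1, n)⟩ : WangTile Lbl),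
    hatT (⟨(0, 0, n + 1), (1, 1, 1), (0, 0, n), (1, 1, n)⟩ : WangTile Lbl),
    junctionTile n 0 0 1 1, junctionTile n 1 1 0 0}

def Tmet (n : ℤ) : Set (WangTile Lbl) :=
  Text n \ (antiH n ∪ hatT '' antiH n ∪ Dset n)

def ValidConfig {C : Type*} (T : Set (WangTile C)) (x : ℤ × ℤ → WangTile C) : Prop :=
  (∀ m, x m ∈ T) ∧
    (∀ m : ℤ × ℤ, (x m).right = (x (m.1 + 1, m.2)).left) ∧
    (∀ m : ℤ × ℤ, (x m).top = (x (m.1, m.2 + 1)).bottom)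

def ValidPattern {C : Type*} (T : Set (WangTile C)) (w h : ℕ) (p : ℕ → ℕ → WangTile C) : Prop :=
  (∀ i j, i < w → j < h → p i j ∈ T) ∧
    (∀ i j, i + 1 < w → j < h → (p i j).right = (p (i + 1) j).left) ∧
    (∀ i j, i < w → j + 1 < h → (p i j).top = (p i (j + 1)).bottom)

def bottomWord {C : Type*} (w : ℕ) (p : ℕ → ℕ → WangTile C) : List C :=
  (List.range w).map fun i => (p i 0).bottom

def topWord {C : Type*} (w h : ℕ) (p : ℕ → ℕ → WangTile C) : List C :=
  (List.range w).map fun i => (p i (h - 1)).top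

def leftWord {C : Type*} (h : ℕ) (p : ℕ → ℕ → WangTile C) : List C :=
  (List.range h).map fun j => (p 0 j).left

def rightWord {C : Type*} (w h : ℕ) (p : ℕ → ℕ → WangTile C) : List C :=
  (List.range h).map fun j => (p (w - 1) j).right

def tau (n : ℤ) (v : Lbl) : List Lbl :=
  if v.1 = v.2.2 then
    (0, v.1 - v.2.1 + 1, n + 1) :: List.replicate (n - v.2.2).toNat (1, 1, n + 1)
  else
    (0, v.1 - v.2.1 + 1, n) ::
      (List.replicate (v.2.2 - v.1 - 1).toNat (1, 1, n) ++
        List.replicate (n + 1 - v.2.2).toNat (1, 1, n + 1))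

/-- The block of the configuration `y` with lower-left corner at `(a, b)`. -/
def BlockAt (y : ℤ × ℤ → WangTile Lbl) (a b : ℤ) : ℕ → ℕ → WangTile Lbl :=
  fun i j => y (a + i, b + j)

/-- `y` is the image of `x` under the substitution `ω'_n` (over the tile set `T`),
with block boundaries given by the strictly increasing sequences `A`, `B`: for every
`(l1, l2)` the block of `y` with support `[A l1, A (l1+1)) × [B l2, B (l2+1))` is the
unique valid rectangular pattern over `T` whose boundary words are the images under
`τ_n` of the labels of `x (l1, l2)`. -/
def IsOmegaImage (n : ℤ) (T : Set (WangTile Lbl))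
    (x y : ℤ × ℤ → WangTile Lbl) (A B : ℤ → ℤ) : Prop :=
  StrictMono A ∧ StrictMono B ∧
  ∀ l1 l2 : ℤ,
    ValidPattern T (A (l1 + 1) - A l1).toNat (B (l2 + 1) - B l2).toNat
      (BlockAt y (A l1) (B l2)) ∧
    rightWord (A (l1 + 1) - A l1).toNat (B (l2 + 1) - B l2).toNat
      (BlockAt y (A l1) (B l2)) = tau n (x (l1, l2)).right ∧
    topWord (A (l1 + 1) - A l1).toNat (B (l2 + 1) - B l2).toNat
      (BlockAt y (A l1) (B l2)) = tau n (x (l1, l2)).top ∧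
    leftWord (B (l2 + 1) - B l2).toNat (BlockAt y (A l1) (B l2)) = tau n (x (l1, l2)).left ∧
    bottomWord (A (l1 + 1) - A l1).toNat (BlockAt y (A l1) (B l2)) = tau n (x (l1, l2)).bottom

/-- Coordinatewise description of `Text n`. -/
theorem mem_Text_iff {n : ℤ} {t : WangTile Lbl} : t ∈ Text n ↔
    (∃ i j : ℤ, 1 ≤ i ∧ i ≤ n ∧ 1 ≤ j ∧ j ≤ n ∧
      t = ⟨(1, 1, i + 1), (1, 1, j + 1), (1, 1, i), (1, 1, j)⟩) ∨
    (∃ p q i : ℤ, 0 ≤ p ∧ p ≤ 1 ∧ 0 ≤ q ∧ q ≤ 1 ∧ p ≤ i ∧ i ≤ n ∧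
      t = ⟨(0, q, i + 1), (1, 1, 1 + p), (0, p, i), (1, 1, n + q)⟩) ∨
    (∃ p q i : ℤ, 0 ≤ p ∧ p ≤ 1 ∧ 0 ≤ q ∧ q ≤ 1 ∧ p ≤ i ∧ i ≤ n ∧
      t = ⟨(1, 1, 1 + p), (0, q, i + 1), (1, 1, n + q), (0, p, i)⟩) ∨
    (∃ k l r s : ℤ, 0 ≤ k ∧ k ≤ l ∧ l ≤ 1 ∧ 0 ≤ r ∧ r ≤ s ∧ s ≤ 1 ∧
      t = junctionTile n k l r s) := by
  constructor
  · rintro (((((((((⟨i, j, h1, h2, h3, h4, rfl⟩ | ⟨i, h1, h2, rfl⟩) | ⟨i, h1, h2, rfl⟩) |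
      ⟨i, h1, h2, rfl⟩) | ⟨i, h1, h2, rfl⟩) | ⟨_, ⟨i, h1, h2, rfl⟩, rfl⟩) |
      ⟨_, ⟨i, h1, h2, rfl⟩, rfl⟩) | ⟨_, ⟨i, h1, h2, rfl⟩, rfl⟩) |
      ⟨_, ⟨i, h1, h2, rfl⟩, rfl⟩) | ⟨k, l, r, s, h1, h2, rfl⟩)
    · exact Or.inl ⟨i, j, h1, h2, h3, h4, rfl⟩
    · exact Or.inr (Or.inl ⟨0, 0, i, by simp [h1, h2]⟩)
    · exact Or.inr (Or.inl ⟨0, 1, i, by simp [h1, h2]⟩)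
    · exact Or.inr (Or.inl ⟨1, 1, i, by simp [h1, h2]⟩)
    · exact Or.inr (Or.inl ⟨1, 0, i, by simp [h1, h2]⟩)
    · exact Or.inr (Or.inr (Or.inl ⟨0, 0, i, by simp [h1, h2, hatT]⟩))
    · exact Or.inr (Or.inr (Or.inl ⟨0, 1, i, by simp [h1, h2, hatT]⟩))
    · exact Or.inr (Or.inr (Or.inl ⟨1, 1, i, by simp [h1, h2, hatT]⟩))
    · exact Or.inr (Or.inr (Or.inl ⟨1, 0, i, by simp [h1, h2, hatT]⟩))
    · refine Or.inr (Or.inr (Or.inr ⟨k, l, r, s, ?_⟩))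
      simp only [jPairs, Set.mem_insert_iff, Set.mem_singleton_iff, Prod.mk.injEq] at h1 h2
      refine ⟨?_, ?_, ?_, ?_, ?_, ?_, rfl⟩ <;> omega
  · rintro (⟨i, j, h1, h2, h3, h4, rfl⟩ | ⟨p, q, i, h1, h2, h3, h4, h5, h6, rfl⟩ |
      ⟨p, q, i, h1, h2, h3, h4, h5, h6, rfl⟩ | ⟨k, l, r, s, h1, h2, h3, h4, h5, h6, rfl⟩)
    · simp only [Text, Set.mem_union]
      iterate 9 left
      exact ⟨i, j, h1, h2, h3, h4, rfl⟩
    · simp only [Text, Set.mem_union]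
      iterate 5 left
      obtain rfl | rfl : p = 0 ∨ p = 1 := by omega
      · obtain rfl | rfl : q = 0 ∨ q = 1 := by omega
        · exact Or.inl (Or.inl (Or.inl (Or.inr ⟨i, h5, h6, by simp⟩)))
        · exact Or.inl (Or.inl (Or.inr ⟨i, h5, h6, by simp⟩))
      · obtain rfl | rfl : q = 0 ∨ q = 1 := by omega
        · exact Or.inr ⟨i, h5, h6, by simp⟩
        · exact Or.inl (Or.inr ⟨i, h5, h6, by simp⟩)
    · simp only [Text, Set.mem_union]
      left
      obtain rfl | rfl : p = 0 ∨ p = 1 := by omega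
      · obtain rfl | rfl : q = 0 ∨ q = 1 := by omega
        · exact Or.inl (Or.inl (Or.inl (Or.inr ⟨_, ⟨i, h5, h6, rfl⟩, by simp [hatT]⟩)))
        · exact Or.inl (Or.inl (Or.inr ⟨_, ⟨i, h5, h6, rfl⟩, by simp [hatT]⟩))
      · obtain rfl | rfl : q = 0 ∨ q = 1 := by omega
        · exact Or.inr ⟨_, ⟨i, h5, h6, rfl⟩, by simp [hatT]⟩
        · exact Or.inl (Or.inr ⟨_, ⟨i, h5, h6, rfl⟩, by simp [hatT]⟩)
    · refine Or.inr ⟨k, l, r, s, ?_, ?_, rfl⟩ <;>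
        simp only [jPairs, Set.mem_insert_iff, Set.mem_singleton_iff, Prod.mk.injEq] <;> omega

/-- Coordinatewise description of `Tmet n`. -/
theorem mem_Tmet_iff {n : ℤ} {t : WangTile Lbl} : t ∈ Tmet n ↔
    (∃ i j : ℤ, 1 ≤ i ∧ i ≤ n ∧ 1 ≤ j ∧ j ≤ n ∧
      t = ⟨(1, 1, i + 1), (1, 1, j + 1), (1, 1, i), (1, 1, j)⟩) ∨
    (∃ p q i : ℤ, 0 ≤ p ∧ p ≤ q ∧ q ≤ 1 ∧ p ≤ i ∧ i ≤ n ∧ (q = 0 → i < n) ∧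
      t = ⟨(0, q, i + 1), (1, 1, 1 + p), (0, p, i), (1, 1, n + q)⟩) ∨
    (∃ p q i : ℤ, 0 ≤ p ∧ p ≤ q ∧ q ≤ 1 ∧ p ≤ i ∧ i ≤ n ∧ (q = 0 → i < n) ∧
      t = ⟨(1, 1, 1 + p), (0, q, i + 1), (1, 1, n + q), (0, p, i)⟩) ∨
    (∃ k l r s : ℤ, 0 ≤ k ∧ k ≤ l ∧ l ≤ 1 ∧ 0 ≤ r ∧ r ≤ s ∧ s ≤ 1 ∧
      ¬ (l = 0 ∧ r = 1) ∧ ¬ (s = 0 ∧ k = 1) ∧ t = junctionTile n k l r s) := by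
  simp only [Tmet, Set.mem_sdiff, mem_Text_iff, Set.mem_union, not_or, Dset, antiH,
    Set.mem_image, Set.mem_ofPred_eq, Set.mem_insert_iff, Set.mem_singleton_iff, not_exists,
    not_and]
  constructor
  · rintro ⟨⟨i, j, h1, h2, h3, h4, rfl⟩ | ⟨p, q, i, h1, h2, h3, h4, h5, h6, rfl⟩ |
      ⟨p, q, i, h1, h2, h3, h4, h5, h6, rfl⟩ | ⟨k, l, r, s, h1, h2, h3, h4, h5, h6, rfl⟩,
      ⟨g1, g2⟩, g3, g4, g5, g6⟩
    · exact Or.inl ⟨i, j, h1, h2, h3, h4, rfl⟩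
    · refine Or.inr (Or.inl ⟨p, q, i, h1, ?_, h4, h5, h6, ?_, rfl⟩)
      · by_contra hc
        obtain rfl : p = 1 := by omega
        obtain rfl : q = 0 := by omega
        exact g1 i h5 h6 (by simp)
      · rintro rfl
        by_contra hc
        obtain rfl : i = n := by omega
        obtain rfl | rfl : p = 0 ∨ p = 1 := by omega
        · exact g3 (by simp)
        · exact g1 i h5 h6 (by simp)
    · refine Or.inr (Or.inr (Or.inl ⟨p, q, i, h1, ?_, h4, h5, h6, ?_, rfl⟩))
      · by_contra hc
        obtain rfl : p = 1 := by omega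
        obtain rfl : q = 0 := by omega
        exact g2 _ ⟨i, h5, h6, rfl⟩ (by simp [hatT])
      · rintro rfl
        by_contra hc
        obtain rfl : i = n := by omega
        obtain rfl | rfl : p = 0 ∨ p = 1 := by omega
        · exact g4 (by simp [hatT])
        · exact g2 _ ⟨i, h5, h6, rfl⟩ (by simp [hatT])
    · refine Or.inr (Or.inr (Or.inr ⟨k, l, r, s, h1, h2, h3, h4, h5, h6, ?_, ?_, rfl⟩))
      · rintro rfl rfl
        obtain rfl : k = 0 := by omega
        obtain rfl : s = 1 := by omega
        exact g5 rfl
      · rintro rfl rfl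
        obtain rfl : l = 1 := by omega
        obtain rfl : r = 0 := by omega
        exact g6 rfl
  · rintro (⟨i, j, h1, h2, h3, h4, rfl⟩ | ⟨p, q, i, h1, h2, h3, h4, h5, h6, rfl⟩ |
      ⟨p, q, i, h1, h2, h3, h4, h5, h6, rfl⟩ | ⟨k, l, r, s, h1, h2, h3, h4, h5, h6, h7, h8, rfl⟩)
    · refine ⟨Or.inl ⟨i, j, h1, h2, h3, h4, rfl⟩, ?_⟩
      simp +contextual [hatT, junctionTile, WangTile.mk.injEq]
    · refine ⟨Or.inr (Or.inl ⟨p, q, i, by omega, by omega, by omega, by omega, by omega,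
        by omega, rfl⟩), ?_⟩
      simp +contextual [hatT, junctionTile, WangTile.mk.injEq]
      exact ⟨by intros; omega, by intros; omega⟩
    · refine ⟨Or.inr (Or.inr (Or.inl ⟨p, q, i, by omega, by omega, by omega, by omega, by omega,
        by omega, rfl⟩)), ?_⟩
      simp +contextual [hatT, junctionTile, WangTile.mk.injEq]
      exact ⟨by intros; omega, by intros; omega⟩
    · refine ⟨Or.inr (Or.inr (Or.inr ⟨k, l, r, s, h1, h2, h3, h4, h5, h6, rfl⟩)), ?_⟩
      simp +contextual [hatT, junctionTile, WangTile.mk.injEq]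
      exact ⟨by intros; omega, by intros; omega⟩

/-- The coordinatewise constraints satisfied by the tiles of `Text n`. -/
theorem facts_of_mem_Text {n : ℤ} {t : WangTile Lbl} (ht : t ∈ Text n) :
    (t.left.1 = t.right.1 ∧ t.bottom.1 = t.top.1) ∧
    (0 ≤ t.left.1 ∧ t.left.1 ≤ 1 ∧ 0 ≤ t.bottom.1 ∧ t.bottom.1 ≤ 1) ∧
    ((0 ≤ t.left.2.2 ∨ n ≤ t.left.2.2) ∧ t.left.2.2 ≤ n + 1) ∧
    (t.bottom.1 = 1 → t.right.2.2 = t.left.2.2 + 1) ∧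
    (t.left.1 = 1 → t.top.2.2 = t.bottom.2.2 + 1) ∧
    (t.bottom.1 = 0 → t.left.2.2 = n + t.top.2.1 ∧ t.right.2.2 = t.bottom.2.1 + t.left.1 ∧
      0 ≤ t.top.2.1 ∧ t.top.2.1 ≤ 1) ∧
    (t.left.1 = 0 → t.bottom.2.2 = n + t.right.2.1 ∧ t.top.2.2 = t.left.2.1 + t.bottom.1 ∧
      0 ≤ t.right.2.1 ∧ t.right.2.1 ≤ 1) ∧
    (t.left.1 = 0 → t.bottom.1 = 0 → t.right.2.1 ≤ t.bottom.2.1 ∧ t.top.2.1 ≤ t.left.2.1) ∧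
    (t.left.1 = 1 → t.left.2.1 = 1) ∧ (t.bottom.1 = 1 → t.bottom.2.1 = 1) := by
  obtain ⟨i, j, h1, h2, h3, h4, rfl⟩ | ⟨p, q, i, h1, h2, h3, h4, h5, h6, rfl⟩ |
      ⟨p, q, i, h1, h2, h3, h4, h5, h6, rfl⟩ | ⟨k, l, r, s, h1, h2, h3, h4, h5, h6, rfl⟩ :=
    mem_Text_iff.1 ht <;> norm_num [junctionTile] <;>
      omega

/-- The reflection of a configuration in the diagonal. -/
def reflect (y : ℤ × ℤ → WangTile Lbl) : ℤ × ℤ → WangTile Lbl := fun m => hatT (y (m.2, m.1))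

theorem hatT_mem_Text {n : ℤ} {t : WangTile Lbl} (ht : t ∈ Text n) : hatT t ∈ Text n := by
  obtain ⟨i, j, h1, h2, h3, h4, rfl⟩ | ⟨p, q, i, h1, h2, h3, h4, h5, h6, rfl⟩ |
      ⟨p, q, i, h1, h2, h3, h4, h5, h6, rfl⟩ | ⟨k, l, r, s, h1, h2, h3, h4, h5, h6, rfl⟩ :=
    mem_Text_iff.1 ht
  · exact mem_Text_iff.2 (Or.inl ⟨j, i, h3, h4, h1, h2, rfl⟩)
  · exact mem_Text_iff.2 (Or.inr (Or.inr (Or.inl ⟨p, q, i, h1, h2, h3, h4, h5, h6, rfl⟩)))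
  · exact mem_Text_iff.2 (Or.inr (Or.inl ⟨p, q, i, h1, h2, h3, h4, h5, h6, rfl⟩))
  · exact mem_Text_iff.2 (Or.inr (Or.inr (Or.inr ⟨r, s, k, l, h4, h5, h6, h1, h2, h3, rfl⟩)))

theorem hatT_mem_Tmet {n : ℤ} {t : WangTile Lbl} (ht : t ∈ Tmet n) : hatT t ∈ Tmet n := by
  obtain ⟨i, j, h1, h2, h3, h4, rfl⟩ | ⟨p, q, i, h1, h2, h3, h4, h5, h6, rfl⟩ |
      ⟨p, q, i, h1, h2, h3, h4, h5, h6, rfl⟩ |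
      ⟨k, l, r, s, h1, h2, h3, h4, h5, h6, h7, h8, rfl⟩ := mem_Tmet_iff.1 ht
  · exact mem_Tmet_iff.2 (Or.inl ⟨j, i, h3, h4, h1, h2, rfl⟩)
  · exact mem_Tmet_iff.2 (Or.inr (Or.inr (Or.inl ⟨p, q, i, h1, h2, h3, h4, h5, h6, rfl⟩)))
  · exact mem_Tmet_iff.2 (Or.inr (Or.inl ⟨p, q, i, h1, h2, h3, h4, h5, h6, rfl⟩))
  · exact mem_Tmet_iff.2
      (Or.inr (Or.inr (Or.inr ⟨r, s, k, l, h4, h5, h6, h1, h2, h3, h8, h7, rfl⟩)))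

theorem ValidConfig.reflect {n : ℤ} {y : ℤ × ℤ → WangTile Lbl} (hy : ValidConfig (Text n) y) :
    ValidConfig (Text n) (reflect y) :=
  ⟨fun m => hatT_mem_Text (hy.1 (m.2, m.1)), fun m => hy.2.2 (m.2, m.1),
    fun m => hy.2.1 (m.2, m.1)⟩

/-- The type (`0` or `1`) of a column. -/
def colType (y : ℤ × ℤ → WangTile Lbl) (a : ℤ) : ℤ := (y (a, 0)).bottom.1

/-- The type (`0` or `1`) of a row. -/
def rowType (y : ℤ × ℤ → WangTile Lbl) (b : ℤ) : ℤ := (y (0, b)).left.1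

/-- The state carried upwards by the tile at `(a, b)`, when column `a` has type `0`. -/
def upState (y : ℤ × ℤ → WangTile Lbl) (a b : ℤ) : ℤ := (y (a, b)).top.2.1

/-- The state carried rightwards by the tile at `(a, b)`, when row `b` has type `0`. -/
def rightState (y : ℤ × ℤ → WangTile Lbl) (a b : ℤ) : ℤ := (y (a, b)).right.2.1

section Config

variable {n : ℤ} {y : ℤ × ℤ → WangTile Lbl}

theorem right_eq (hy : ValidConfig (Text n) y) (a b : ℤ) :
    (y (a, b)).right = (y (a + 1, b)).left := hy.2.1 (a, b)

theorem top_eq (hy : ValidConfig (Text n) y) (a b : ℤ) :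
    (y (a, b)).top = (y (a, b + 1)).bottom := hy.2.2 (a, b)

theorem bottom_fst (hy : ValidConfig (Text n) y) (a b : ℤ) :
    (y (a, b)).bottom.1 = colType y a := by
  have key : ∀ b, (y (a, b + 1)).bottom.1 = (y (a, b)).bottom.1 := fun b => by
    rw [← top_eq hy a b, (facts_of_mem_Text (hy.1 (a, b))).1.2]
  induction b using Int.induction_on with
  | zero => rfl
  | succ i ih => rw [key, ih]
  | pred i ih => rw [← key, sub_add_cancel, ih]

theorem left_fst (hy : ValidConfig (Text n) y) (a b : ℤ) :
    (y (a, b)).left.1 = rowType y b :=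
  bottom_fst hy.reflect b a

theorem bottom_snd (hy : ValidConfig (Text n) y) (a b : ℤ) :
    (y (a, b)).bottom.2.1 = upState y a (b - 1) := by
  have := top_eq hy a (b - 1)
  rw [sub_add_cancel] at this
  rw [← this, upState]

theorem left_snd (hy : ValidConfig (Text n) y) (a b : ℤ) :
    (y (a, b)).left.2.1 = rightState y (a - 1) b :=
  bottom_snd hy.reflect b a

theorem colType_bounds (hy : ValidConfig (Text n) y) (a : ℤ) :
    0 ≤ colType y a ∧ colType y a ≤ 1 := by
  have := (facts_of_mem_Text (hy.1 (a, 0))).2.1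
  exact this.2.2

theorem upState_bounds (hy : ValidConfig (Text n) y) {a : ℤ} (ha : colType y a = 0) (b : ℤ) :
    0 ≤ upState y a b ∧ upState y a b ≤ 1 := by
  have := (facts_of_mem_Text (hy.1 (a, b))).2.2.2.2.2.1 (by rw [bottom_fst hy, ha])
  exact this.2.2

theorem rowType_bounds (hy : ValidConfig (Text n) y) (b : ℤ) :
    0 ≤ rowType y b ∧ rowType y b ≤ 1 := colType_bounds hy.reflect b

theorem rightState_bounds (hy : ValidConfig (Text n) y) {b : ℤ} (hb : rowType y b = 0) (a : ℤ) :
    0 ≤ rightState y a b ∧ rightState y a b ≤ 1 := upState_bounds hy.reflect hb a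

theorem junction_le (hy : ValidConfig (Text n) y) {a b : ℤ} (ha : colType y a = 0)
    (hb : rowType y b = 0) :
    rightState y a b ≤ upState y a (b - 1) ∧ upState y a b ≤ rightState y (a - 1) b := by
  have := (facts_of_mem_Text (hy.1 (a, b))).2.2.2.2.2.2.2.1 (by rw [left_fst hy, hb])
    (by rw [bottom_fst hy, ha])
  rw [bottom_snd hy, left_snd hy] at this
  exact this

theorem left_third_of_one (hy : ValidConfig (Text n) y) {a : ℤ} (b : ℤ) (j : ℕ)
    (h : ∀ m, a < m → m ≤ a + j → colType y m = 1) :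
    (y (a + 1 + j, b)).left.2.2 = (y (a, b)).right.2.2 + j := by
  induction j with
  | zero => simp [right_eq hy a b]
  | succ j ih =>
    have h1 := ih fun m h1 h2 => h m h1 (by push_cast; omega)
    have h2 := (facts_of_mem_Text (hy.1 (a + 1 + j, b))).2.2.2.1
      (by rw [bottom_fst hy]; exact h _ (by omega) (by push_cast; omega))
    rw [right_eq hy] at h2
    push_cast
    rw [← add_assoc, h2, h1, add_assoc]

/-- Every window of `n + 3` columns contains a column of type `0`. -/
theorem exists_colType_zero (hn : 1 ≤ n) (hy : ValidConfig (Text n) y) (a : ℤ) :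
    ∃ m, a < m ∧ m ≤ a + (n + 3) ∧ colType y m = 0 := by
  by_contra! hc
  have h1 : ∀ m, a < m → m ≤ a + (n + 3).toNat → colType y m = 1 := fun m h1 h2 => by
    have := colType_bounds hy m
    have := hc m h1 (by omega)
    omega
  have h2 := left_third_of_one hy 0 _ h1
  have h3 := (facts_of_mem_Text (hy.1 (a + 1 + (n + 3).toNat, 0))).2.2.1
  have h4 := (facts_of_mem_Text (hy.1 (a + 1, 0))).2.2.1
  rw [right_eq hy] at h2
  omega

/-- `a < a'` are consecutive zeros of the `0`-`1`-valued function `f`. -/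
def Consec (f : ℤ → ℤ) (a a' : ℤ) : Prop :=
  a < a' ∧ f a = 0 ∧ f a' = 0 ∧ ∀ m, a < m → m < a' → f m = 1

theorem upState_step (hy : ValidConfig (Text n) y) {a a' : ℤ} (h : Consec (colType y) a a')
    (b : ℤ) : n + upState y a' b = upState y a (b - 1) + rowType y b + (a' - a - 1) := by
  obtain ⟨h1, h2, h3, h4⟩ := h
  have := left_third_of_one hy (a := a) b (a' - a - 1).toNat fun m g1 g2 => h4 m g1 (by omega)
  have e : a + 1 + ((a' - a - 1).toNat : ℤ) = a' := by omega
  rw [e] at this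
  have f1 := ((facts_of_mem_Text (hy.1 (a', b))).2.2.2.2.2.1 (by rw [bottom_fst hy, h3])).1
  have f2 := ((facts_of_mem_Text (hy.1 (a, b))).2.2.2.2.2.1 (by rw [bottom_fst hy, h2])).2.1
  rw [bottom_snd hy, left_fst hy] at f2
  rw [upState]
  omega

theorem rightState_step (hy : ValidConfig (Text n) y) {b b' : ℤ} (h : Consec (rowType y) b b')
    (a : ℤ) : n + rightState y a b' = rightState y (a - 1) b + colType y a + (b' - b - 1) :=
  upState_step hy.reflect h a

end Config

theorem exists_enum {f : ℤ → ℤ} (hf : ∀ a, 0 ≤ f a ∧ f a ≤ 1) {c : ℤ}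
    (h : ∀ a, ∃ m, a < m ∧ m ≤ a + c ∧ f m = 0) :
    ∃ A : ℤ → ℤ, StrictMono A ∧ (∀ l, Consec f (A l) (A (l + 1))) ∧
      ∀ a, f a = 0 → ∃ l, A l = a := by
  classical
  let S := {a : ℤ // f a = 0}
  have : Nonempty S := by
    obtain ⟨m, -, -, hm⟩ := h 0
    exact ⟨⟨m, hm⟩⟩
  have : NoMaxOrder S := ⟨fun a => by
    obtain ⟨m, h1, -, hm⟩ := h a
    exact ⟨⟨m, hm⟩, h1⟩⟩
  have : NoMinOrder S := ⟨fun a => by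
    obtain ⟨m, -, h1, hm⟩ := h (a - c - 1)
    exact ⟨⟨m, hm⟩, Subtype.mk_lt_mk.2 (show m < (a : ℤ) by omega)⟩⟩
  let : LocallyFiniteOrder S := Subtype.instLocallyFiniteOrder _
  let : SuccOrder S := LinearLocallyFiniteOrder.succOrder S
  let : PredOrder S := LinearLocallyFiniteOrder.predOrder S
  let e : S ≃o ℤ := orderIsoIntOfLinearSuccPredArch
  have hmono : StrictMono fun l => (e.symm l : ℤ) := fun a b hab => e.symm.strictMono hab
  refine ⟨fun l => (e.symm l : ℤ), hmono, fun l => ⟨hmono (by omega), (e.symm l).2,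
    (e.symm (l + 1)).2, fun m h1 h2 => ?_⟩, fun a ha => ⟨e ⟨a, ha⟩, by simp⟩⟩
  by_contra hm
  have hm0 : f m = 0 := by have := hf m; omega
  have g1 : l < e ⟨m, hm0⟩ := e.symm_apply_lt.1 h1
  have g2 : e ⟨m, hm0⟩ < l + 1 := e.lt_symm_apply.1 h2
  omega

section Config

variable {n : ℤ} {y : ℤ × ℤ → WangTile Lbl}

theorem exists_col_enum (hn : 1 ≤ n) (hy : ValidConfig (Text n) y) :
    ∃ A : ℤ → ℤ, StrictMono A ∧ (∀ l, Consec (colType y) (A l) (A (l + 1))) ∧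
      ∀ a, colType y a = 0 → ∃ l, A l = a :=
  exists_enum (colType_bounds hy) (exists_colType_zero hn hy)

theorem exists_consec_right (hn : 1 ≤ n) (hy : ValidConfig (Text n) y) {a : ℤ}
    (ha : colType y a = 0) : ∃ a', Consec (colType y) a a' := by
  obtain ⟨A, -, h1, h2⟩ := exists_col_enum hn hy
  obtain ⟨l, rfl⟩ := h2 a ha
  exact ⟨_, h1 l⟩

theorem exists_consec_left (hn : 1 ≤ n) (hy : ValidConfig (Text n) y) {a : ℤ}
    (ha : colType y a = 0) : ∃ a', Consec (colType y) a' a := by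
  obtain ⟨A, -, h1, h2⟩ := exists_col_enum hn hy
  obtain ⟨l, rfl⟩ := h2 a ha
  refine ⟨A (l - 1), ?_⟩
  have := h1 (l - 1)
  rwa [sub_add_cancel] at this

theorem exists_colType_one (hn : 1 ≤ n) (hy : ValidConfig (Text n) y) :
    ∃ a, colType y a = 1 := by
  by_contra! hc
  have h0 : ∀ a, colType y a = 0 := fun a => by
    have := colType_bounds hy a
    have := hc a
    omega
  have step : ∀ a b, n + upState y (a + 1) b = upState y a (b - 1) + rowType y b := fun a b => by
    have := upState_step hy (a := a) (a' := a + 1)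
      ⟨by omega, h0 _, h0 _, fun m h1 h2 => by omega⟩ b
    omega
  obtain ⟨b, -, -, hb⟩ := exists_colType_zero hn hy.reflect 0
  obtain ⟨b', h1, h2, h3, h4⟩ := exists_consec_right hn hy.reflect hb
  change rowType y b = 0 at hb
  change rowType y b' = 0 at h3
  have hz : ∀ j : ℕ, b + j < b' → ∀ a, upState y a (b + j) = 0 := by
    intro j
    induction j with
    | zero =>
      intro _ a
      have s := step (a - 1) (b + (0 : ℕ))
      have := upState_bounds hy (h0 (a - 1)) (b + (0 : ℕ) - 1)
      have := upState_bounds hy (h0 a) (b + (0 : ℕ))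
      simp only [Nat.cast_zero, add_zero, sub_add_cancel] at *
      omega
    | succ j ih =>
      intro hj a
      push_cast at hj ⊢
      have s := step (a - 1) (b + (j + 1))
      have e : b + ((j : ℤ) + 1) - 1 = b + j := by ring
      rw [e, ih (by omega), sub_add_cancel] at s
      have := rowType_bounds hy (b + (j + 1))
      have := upState_bounds hy (h0 a) (b + (j + 1))
      omega
  have s := step 0 b'
  have z := hz (b' - 1 - b).toNat (by omega) 0
  have e : b + ((b' - 1 - b).toNat : ℤ) = b' - 1 := by omega
  rw [e] at z
  have := upState_bounds hy (h0 (0 + 1)) b'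
  omega

theorem consec_col_gap (hn : 1 ≤ n) (hy : ValidConfig (Text n) y) {a a' : ℤ}
    (h : Consec (colType y) a a') : a' - a = n ∨ a' - a = n + 1 := by
  obtain ⟨b, hb⟩ := exists_colType_one hn hy.reflect
  obtain ⟨b', -, -, hb'⟩ := exists_colType_zero hn hy.reflect 0
  change rowType y b = 1 at hb
  change rowType y b' = 0 at hb'
  have s := upState_step hy h b
  have s' := upState_step hy h b'
  have := upState_bounds hy h.2.1 (b - 1)
  have := upState_bounds hy h.2.1 (b' - 1)
  have := upState_bounds hy h.2.2.1 b
  have := upState_bounds hy h.2.2.1 b'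
  omega

/-- There are no vertical antigreen tiles in a valid configuration over `Text n`. -/
theorem upState_mono (hn : 1 ≤ n) (hy : ValidConfig (Text n) y) {a b : ℤ}
    (ha : colType y a = 0) (hb : rowType y b = 1) : upState y a (b - 1) ≤ upState y a b := by
  by_contra hc
  have key : ∀ j : ℕ, ∃ a, colType y a = 0 ∧ rowType y (b - j) = 1 ∧
      ¬ upState y a (b - j - 1) ≤ upState y a (b - j) := by
    intro j
    induction j with
    | zero => exact ⟨a, ha, by simpa using hb, by simpa using hc⟩
    | succ j ih =>
      obtain ⟨a, ha, hb, hc⟩ := ih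
      obtain ⟨a', h⟩ := exists_consec_left hn hy ha
      have g := consec_col_gap hn hy h
      have s1 := upState_step hy h (b - j)
      have s2 := upState_step hy h (b - j - 1)
      have := upState_bounds hy ha (b - j)
      have := upState_bounds hy ha (b - j - 1)
      have := upState_bounds hy h.2.1 (b - j - 1)
      have := upState_bounds hy h.2.1 (b - j - 1 - 1)
      have := rowType_bounds hy (b - j - 1)
      push_cast
      rw [← sub_sub]
      exact ⟨a', h.2.1, by omega, by omega⟩
  obtain ⟨m, -, h1, h2⟩ := exists_colType_zero hn hy.reflect (b - (n + 3))
  obtain ⟨-, -, h3, -⟩ := key (b - m).toNat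
  change rowType y m = 0 at h2
  have e : b - ((b - m).toNat : ℤ) = m := by omega
  rw [e] at h3
  omega

theorem not_junction_zero_one (hn : 1 ≤ n) (hy : ValidConfig (Text n) y) {a b : ℤ}
    (ha : colType y a = 0) (hb : rowType y b = 0) (h1 : upState y a b = 1) :
    upState y a (b - 1) ≠ 0 := by
  intro h0
  obtain ⟨a', h⟩ := exists_consec_right hn hy ha
  obtain ⟨b', h'⟩ := exists_consec_right hn hy.reflect hb
  have g := consec_col_gap hn hy h
  have g' := consec_col_gap hn hy.reflect h'
  have s1 := upState_step hy h b
  have s2 := upState_step hy h (b + 1)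
  rw [add_sub_cancel_right] at s2
  have := upState_bounds hy h.2.2.1 b
  have := upState_bounds hy h.2.2.1 (b + 1)
  have := rowType_bounds hy (b + 1)
  have hb1 : rowType y (b + 1) = 0 := by omega
  have e : b' = b + 1 := by
    by_contra hne
    have : rowType y (b + 1) = 1 := h'.2.2.2 (b + 1) (by omega) (by have := h'.1; omega)
    omega
  subst e
  have t1 := rightState_step hy h' (a + 1)
  rw [add_sub_cancel_right] at t1
  have := rightState_bounds hy hb1 (a + 1)
  have := rightState_bounds hy hb a
  have j := junction_le hy ha hb
  have := colType_bounds hy (a + 1)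
  have e2 : a' = a + 2 := by omega
  have j' := junction_le hy h.2.2.1 hb1
  have e3 : a' - 1 = a + 1 := by omega
  rw [e3] at j'
  omega

/-- The additional tiles of `Text n` are not used in valid configurations. -/
theorem ValidConfig.tmet (hn : 1 ≤ n) (hy : ValidConfig (Text n) y) :
    ValidConfig (Tmet n) y := by
  have blue : ∀ {y : ℤ × ℤ → WangTile Lbl}, ValidConfig (Text n) y → ∀ m : ℤ × ℤ,
      (y m).right ≠ (0, 0, n + 1) := fun {y} hy m h => by
    rw [hy.2.1] at h
    obtain ⟨i, j, h1, h2, h3, h4, ht⟩ | ⟨p, q, i, h1, h2, h3, h4, h5, h6, ht⟩ |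
        ⟨p, q, i, h1, h2, h3, h4, h5, h6, ht⟩ | ⟨k, l, r, s, h1, h2, h3, h4, h5, h6, ht⟩ :=
      mem_Text_iff.1 (hy.1 (m.1 + 1, m.2)) <;> rw [ht] at h <;>
        simp only [junctionTile, Prod.mk.injEq] at h <;> omega
  have anti : ∀ {y : ℤ × ℤ → WangTile Lbl}, ValidConfig (Text n) y → ∀ m : ℤ × ℤ,
      (y m).bottom.1 = 0 → (y m).left.1 = 1 → (y m).bottom.2.1 ≤ (y m).top.2.1 :=
    fun {y} hy m h h' => by
      rw [bottom_snd hy]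
      exact upState_mono hn hy ((bottom_fst hy m.1 m.2).symm.trans h)
        ((left_fst hy m.1 m.2).symm.trans h')
  have junc : ∀ {y : ℤ × ℤ → WangTile Lbl}, ValidConfig (Text n) y → ∀ m : ℤ × ℤ,
      (y m).bottom.1 = 0 → (y m).left.1 = 0 → (y m).top.2.1 = 1 → (y m).bottom.2.1 ≠ 0 :=
    fun {y} hy m h h' h1 => by
      rw [bottom_snd hy]
      exact not_junction_zero_one hn hy ((bottom_fst hy m.1 m.2).symm.trans h)
        ((left_fst hy m.1 m.2).symm.trans h') h1
  refine ⟨fun m => ?_, hy.2⟩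
  have b1 := blue hy m
  have b2 := blue hy.reflect (m.2, m.1)
  have a1 := anti hy m
  have a2 := anti hy.reflect (m.2, m.1)
  have j1 := junc hy m
  have j2 := junc hy.reflect (m.2, m.1)
  change (y m).top ≠ _ at b2
  change (y m).left.1 = 0 → (y m).bottom.1 = 1 → (y m).left.2.1 ≤ (y m).right.2.1 at a2
  change (y m).left.1 = 0 → (y m).bottom.1 = 0 → (y m).right.2.1 = 1 → (y m).left.2.1 ≠ 0 at j2
  rw [mem_Tmet_iff]
  obtain ⟨i, j, h1, h2, h3, h4, ht⟩ | ⟨p, q, i, h1, h2, h3, h4, h5, h6, ht⟩ |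
      ⟨p, q, i, h1, h2, h3, h4, h5, h6, ht⟩ | ⟨k, l, r, s, h1, h2, h3, h4, h5, h6, ht⟩ :=
    mem_Text_iff.1 (hy.1 m) <;> rw [ht] at b1 b2 a1 a2 j1 j2 <;>
    simp [junctionTile] at b1 b2 a1 a2 j1 j2
  · exact Or.inl ⟨i, j, h1, h2, h3, h4, ht⟩
  · exact Or.inr (Or.inl ⟨p, q, i, h1, by omega, by omega, h5, h6, by omega, ht⟩)
  · exact Or.inr (Or.inr (Or.inl ⟨p, q, i, h1, by omega, by omega, h5, h6, by omega, ht⟩))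
  · exact Or.inr (Or.inr (Or.inr
      ⟨k, l, r, s, h1, h2, h3, h4, h5, h6, by omega, by omega, ht⟩))

end Config

/-- The step function with values `0` to the left of `Z` and `1` from `Z` on. -/
def stepAt (Z j : ℤ) : ℤ := if j < Z then 0 else 1

/-- The `j`-th letter of `tau n v`. -/
def tauLetter (n : ℤ) (v : Lbl) (j : ℤ) : Lbl :=
  if j = 0 then (0, v.1 - v.2.1 + 1, n + stepAt (v.2.2 - v.1) 0)
  else (1, 1, n + stepAt (v.2.2 - v.1) j)

/-- The labels for which `tau n` is the word of length `n + 1 - v.1` spelled by `tauLetter n`. -/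
def Admissible (n : ℤ) (v : Lbl) : Prop :=
  0 ≤ v.1 ∧ v.1 ≤ 1 ∧ v.1 ≤ v.2.2 ∧ v.2.2 ≤ n + 1

theorem tau_eq_map {n : ℤ} (hn : 1 ≤ n) {v : Lbl} (hv : Admissible n v) :
    tau n v = (List.range (n + 1 - v.1).toNat).map fun j : ℕ => tauLetter n v j := by
  obtain ⟨x, y, z⟩ := v
  obtain ⟨h1, h2, h3, h4⟩ := hv
  simp only at h1 h2 h3 h4
  unfold tau
  split_ifs with h
  · simp only at h
    refine List.ext_getElem (by simp; omega) fun i hi hi' => ?_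
    cases i with
    | zero => simp [tauLetter, stepAt, h]
    | succ i =>
      simp only [List.getElem_cons_succ, List.getElem_replicate, List.getElem_map,
        List.getElem_range, tauLetter, stepAt]
      rw [if_neg (by omega), if_neg (by push_cast; omega)]
  · simp only at h
    refine List.ext_getElem (by simp; omega) fun i hi hi' => ?_
    cases i with
    | zero =>
      have : x < z := by omega
      simp [tauLetter, stepAt, this]
    | succ i =>
      simp only [List.getElem_cons_succ, List.getElem_append, List.length_replicate,
        List.getElem_replicate, List.getElem_map, List.getElem_range, tauLetter, stepAt]
      rw [if_neg (c := ((i + 1 : ℕ) : ℤ) = 0) (by omega)]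
      by_cases hc : i < (z - x - 1).toNat
      · rw [dif_pos hc, if_pos (by push_cast; omega), add_zero]
      · rw [dif_neg hc, if_neg (by push_cast; omega)]

theorem length_tau {n : ℤ} (hn : 1 ≤ n) {v : Lbl} (hv : Admissible n v) :
    ((tau n v).length : ℤ) = n + 1 - v.1 := by
  have := hv.2.1
  rw [tau_eq_map hn hv, List.length_map, List.length_range]
  omega

theorem map_range_eq_tau_iff {n : ℤ} (hn : 1 ≤ n) {v : Lbl} (hv : Admissible n v) {h : ℕ}
    {f : ℕ → Lbl} : (List.range h).map f = tau n v ↔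
      (h : ℤ) = n + 1 - v.1 ∧ ∀ j : ℕ, j < h → f j = tauLetter n v j := by
  have := hv.2.1
  constructor
  · intro e
    have hl := length_tau hn hv
    rw [← e, List.length_map, List.length_range] at hl
    rw [tau_eq_map hn hv, show (n + 1 - v.1).toNat = h by omega, List.map_inj_left] at e
    exact ⟨hl, fun j hj => e j (List.mem_range.2 hj)⟩
  · rintro ⟨hl, e⟩
    rw [tau_eq_map hn hv, show (n + 1 - v.1).toNat = h by omega, List.map_inj_left]
    exact fun j hj => e j (List.mem_range.1 hj)

theorem tau_injective {n : ℤ} (hn : 1 ≤ n) {v w : Lbl} (hv : Admissible n v)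
    (hw : Admissible n w) (h : tau n v = tau n w) : v = w := by
  have h1 := length_tau hn hv
  rw [h, length_tau hn hw] at h1
  rw [tau_eq_map hn hv, map_range_eq_tau_iff hn hw] at h
  obtain ⟨-, h⟩ := h
  obtain ⟨x, y, z⟩ := v
  obtain ⟨x', y', z'⟩ := w
  obtain ⟨a1, a2, a3, a4⟩ := hv
  obtain ⟨b1, b2, b3, b4⟩ := hw
  simp only at h h1 a1 a2 a3 a4 b1 b2 b3 b4
  obtain rfl : x = x' := by omega
  have e0 := h 0 (by omega)
  simp only [tauLetter, Nat.cast_zero, if_true, Prod.mk.injEq] at e0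
  have key : ∀ j : ℤ, 0 ≤ j → j < n + 1 - x → stepAt (z - x) j = stepAt (z' - x) j := by
    intro j hj hj'
    lift j to ℕ using hj
    by_cases hj0 : j = 0
    · subst hj0
      simp only [Nat.cast_zero]
      omega
    · have := h j (by omega)
      simp only [tauLetter, Nat.cast_eq_zero, hj0, if_false, Prod.mk.injEq] at this
      omega
  simp only [stepAt] at key
  have k1 := key (z - x)
  have k2 := key (z' - x)
  simp only [Prod.mk.injEq]
  refine ⟨trivial, by omega, ?_⟩
  split_ifs at k1 k2 <;> omega

theorem admissible_of_mem {n : ℤ} (hn : 1 ≤ n) {t : WangTile Lbl} (ht : t ∈ Tmet n) :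
    Admissible n t.right ∧ Admissible n t.top ∧ Admissible n t.left ∧ Admissible n t.bottom := by
  obtain ⟨i, j, h1, h2, h3, h4, rfl⟩ | ⟨p, q, i, h1, h2, h3, h4, h5, h6, rfl⟩ |
      ⟨p, q, i, h1, h2, h3, h4, h5, h6, rfl⟩ |
      ⟨k, l, r, s, h1, h2, h3, h4, h5, h6, h7, h8, rfl⟩ := mem_Tmet_iff.1 ht <;>
    simp only [junctionTile, Admissible] <;> omega

theorem Tmet_subset_Text (n : ℤ) : Tmet n ⊆ Text n := Set.sdiff_subset

/-- The tile at position `(i, j)` of the block associated with a tile `t`. -/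
def blockTile (n : ℤ) (t : WangTile Lbl) (i j : ℤ) : WangTile Lbl :=
  let l := t.bottom.1 + 1 - t.bottom.2.1
  let s := t.left.1 + 1 - t.left.2.1
  let P := stepAt (t.bottom.2.2 - t.bottom.1)
  let S := stepAt (t.left.2.2 - t.left.1)
  if i = 0 then
    if j = 0 then ⟨(0, P 0, l), (0, S 0, s), (0, s, S 0 + n), (0, l, P 0 + n)⟩
    else ⟨(1, 1, 1 + S (j - 1)), (0, S j, s + j - 1 + 1), (1, 1, n + S j),
      (0, S (j - 1), s + j - 1)⟩
  else
    if j = 0 then ⟨(0, P i, l + i - 1 + 1), (1, 1, 1 + P (i - 1)), (0, P (i - 1), l + i - 1),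
      (1, 1, n + P i)⟩
    else ⟨(1, 1, i + S (j - 1) + 1), (1, 1, j + P (i - 1) + 1), (1, 1, i + S (j - 1)),
      (1, 1, j + P (i - 1))⟩

theorem blockTile_hatT (n : ℤ) (t : WangTile Lbl) (i j : ℤ) :
    blockTile n (hatT t) j i = hatT (blockTile n t i j) := by
  unfold blockTile
  by_cases hi : i = 0 <;> by_cases hj : j = 0 <;> simp [hi, hj, hatT]

/-- Relations between the labels of a tile ensuring that its block is valid. -/
theorem compat_of_mem {n : ℤ} (hn : 1 ≤ n) {t : WangTile Lbl} (ht : t ∈ Tmet n) :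
    let u := t.bottom.1
    let v := t.left.1
    let l := u + 1 - t.bottom.2.1
    let s := v + 1 - t.left.2.1
    let P := stepAt (t.bottom.2.2 - u)
    let S := stepAt (t.left.2.2 - v)
    t.right.1 = v ∧ 0 ≤ u ∧ u ≤ 1 ∧ 0 ≤ s ∧ s ≤ 1 ∧ S 0 ≤ s ∧ P (n - u) = v + 1 - t.right.2.1 ∧
      l - u = stepAt (t.right.2.2 - v) 0 ∧
      (∀ j, 1 ≤ j → j ≤ n - v → 1 - u + S (j - 1) = stepAt (t.right.2.2 - v) j) ∧
      (u = 0 → l = 1 → P n = 1) ∧ (l = 0 → S 0 = 0) := by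
  simp only [stepAt]
  obtain ⟨i, j, h1, h2, h3, h4, rfl⟩ | ⟨p, q, i, h1, h2, h3, h4, h5, h6, rfl⟩ |
      ⟨p, q, i, h1, h2, h3, h4, h5, h6, rfl⟩ |
      ⟨k, l, r, s, h1, h2, h3, h4, h5, h6, h7, h8, rfl⟩ := mem_Tmet_iff.1 ht <;>
    simp only [junctionTile] <;> and_intros <;> intros <;> (try split_ifs) <;>
    first | trivial | omega

theorem stepAt_bounds (Z j : ℤ) : 0 ≤ stepAt Z j ∧ stepAt Z j ≤ 1 := by
  unfold stepAt; split_ifs <;> omega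

theorem stepAt_mono (Z : ℤ) {i j : ℤ} (h : i ≤ j) : stepAt Z i ≤ stepAt Z j := by
  unfold stepAt; split_ifs <;> omega

theorem blockTile_mem {n : ℤ} (hn : 1 ≤ n) {t : WangTile Lbl} (ht : t ∈ Tmet n) {i j : ℤ}
    (hi : 0 ≤ i) (hi' : i < n + 1 - t.bottom.1) (hj : 0 ≤ j) (hj' : j < n + 1 - t.left.1) :
    blockTile n t i j ∈ Tmet n := by
  obtain ⟨-, u0, u1, s0, s1, S0, c1, c2, c3, c4, c5⟩ := compat_of_mem hn ht
  obtain ⟨-, v0, v1, l0, l1, P0, d1, d2, d3, d4, d5⟩ := compat_of_mem hn (hatT_mem_Tmet ht)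
  simp only [hatT] at v0 v1 l0 l1 P0 d1 d2 d3 d4 d5
  have bP := stepAt_bounds (t.bottom.2.2 - t.bottom.1)
  have bS := stepAt_bounds (t.left.2.2 - t.left.1)
  have mP := @stepAt_mono (t.bottom.2.2 - t.bottom.1)
  have mS := @stepAt_mono (t.left.2.2 - t.left.1)
  simp only [blockTile]
  generalize stepAt (t.bottom.2.2 - t.bottom.1) = P at *
  generalize stepAt (t.left.2.2 - t.left.1) = S at *
  rw [mem_Tmet_iff]
  by_cases hi0 : i = 0 <;> by_cases hj0 : j = 0 <;> simp only [hi0, hj0, if_true, if_false]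
  · refine Or.inr (Or.inr (Or.inr ⟨P 0, _, S 0, _, (bP 0).1, P0, l1, (bS 0).1, S0, s1,
      by omega, by omega, ?_⟩))
    rfl
  · refine Or.inr (Or.inr (Or.inl ⟨S (j - 1), S j, _, (bS _).1, mS (by omega), (bS _).2, ?_, ?_,
      ?_, rfl⟩))
    · have := bS (j - 1)
      by_cases h1 : j = 1
      · subst h1
        simp only [sub_self]
        omega
      · omega
    · omega
    · intro h
      by_contra hc
      have := d4 (by omega) (by omega)
      rw [show j = n by omega] at h
      omega
  · refine Or.inr (Or.inl ⟨P (i - 1), P i, _, (bP _).1, mP (by omega), (bP _).2, ?_, ?_,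
      ?_, rfl⟩)
    · have := bP (i - 1)
      by_cases h1 : i = 1
      · subst h1
        simp only [sub_self]
        omega
      · omega
    · omega
    · intro h
      by_contra hc
      have := c4 (by omega) (by omega)
      rw [show i = n by omega] at h
      omega
  · have g1 := c3 j (by omega) (by omega)
    have g2 := d3 i (by omega) (by omega)
    have := bP (i - 1)
    have := bS (j - 1)
    have := stepAt_bounds (t.right.2.2 - t.left.1) j
    have := stepAt_bounds (t.top.2.2 - t.bottom.1) i
    exact Or.inl ⟨_, _, by omega, by omega, by omega, by omega, rfl⟩

theorem blockTile_right {n : ℤ} (t : WangTile Lbl) {i j : ℤ} (hi : 0 ≤ i) :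
    (blockTile n t i j).right = (blockTile n t (i + 1) j).left := by
  simp only [blockTile]
  rw [if_neg (c := i + 1 = 0) (by omega)]
  by_cases hi0 : i = 0 <;> by_cases hj0 : j = 0 <;>
    simp only [hi0, hj0, if_true, if_false, zero_add, add_sub_cancel_right, Prod.mk.injEq, sub_self,
      true_and] <;> omega

theorem blockTile_left {n : ℤ} (t : WangTile Lbl) (j : ℤ) :
    (blockTile n t 0 j).left = tauLetter n t.left j := by
  simp only [blockTile, tauLetter, if_true]
  split_ifs
  · simp only [Prod.mk.injEq, true_and]; omega
  · rfl

theorem blockTile_right_last {n : ℤ} (hn : 1 ≤ n) {t : WangTile Lbl} (ht : t ∈ Tmet n) {j : ℤ}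
    (hj : 0 ≤ j) (hj' : j < n + 1 - t.left.1) :
    (blockTile n t (n - t.bottom.1) j).right = tauLetter n t.right j := by
  obtain ⟨v', u0, u1, s0, s1, S0, c1, c2, c3, c4, c5⟩ := compat_of_mem hn ht
  rw [blockTile_right t (by omega)]
  simp only [blockTile, tauLetter, v']
  rw [if_neg (by omega)]
  split_ifs with hj0
  · simp only [Prod.mk.injEq, add_sub_cancel_right, true_and]
    omega
  · simp only [Prod.mk.injEq, true_and]
    have := c3 j (by omega) (by omega)
    omega

/-- The block `ω_n(t)` of a tile `t`, with its boundary words. -/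
theorem exists_block {n : ℤ} (hn : 1 ≤ n) {t : WangTile Lbl} (ht : t ∈ Tmet n) :
    ∃ p, ValidPattern (Tmet n) (n + 1 - t.bottom.1).toNat (n + 1 - t.left.1).toNat p ∧
      rightWord (n + 1 - t.bottom.1).toNat (n + 1 - t.left.1).toNat p = tau n t.right ∧
      topWord (n + 1 - t.bottom.1).toNat (n + 1 - t.left.1).toNat p = tau n t.top ∧
      leftWord (n + 1 - t.left.1).toNat p = tau n t.left ∧
      bottomWord (n + 1 - t.bottom.1).toNat p = tau n t.bottom := by
  obtain ⟨a1, a2, a3, a4⟩ := admissible_of_mem hn ht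
  have hf := (facts_of_mem_Text (Tmet_subset_Text n ht)).1
  have hu := a4.2.1
  have hv := a3.2.1
  refine ⟨fun i j => blockTile n t i j, ⟨fun i j hi hj => ?_, fun i j hi hj => ?_,
    fun i j hi hj => ?_⟩, ?_, ?_, ?_, ?_⟩
  · exact blockTile_mem hn ht (by omega) (by omega) (by omega) (by omega)
  · push_cast
    exact blockTile_right t (by omega)
  · push_cast
    have := blockTile_right (n := n) (hatT t) (i := j) (j := i) (by omega)
    rw [blockTile_hatT, blockTile_hatT] at this
    exact this
  · refine (map_range_eq_tau_iff hn a1).2 ⟨by omega, fun j hj => ?_⟩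
    rw [← blockTile_right_last hn ht (by omega) (by omega)]
    beta_reduce
    rw [show (((n + 1 - t.bottom.1).toNat - 1 : ℕ) : ℤ) = n - t.bottom.1 by omega]
  · refine (map_range_eq_tau_iff hn a2).2 ⟨by omega, fun j hj => ?_⟩
    have := blockTile_right_last hn (hatT_mem_Tmet ht) (j := j) (by omega)
      (by simp only [hatT]; omega)
    rw [blockTile_hatT] at this
    simp only [hatT] at this
    rw [← this]
    beta_reduce
    rw [show (((n + 1 - t.left.1).toNat - 1 : ℕ) : ℤ) = n - t.left.1 by omega]
  · exact (map_range_eq_tau_iff hn a3).2 ⟨by omega, fun j hj => blockTile_left t j⟩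
  · refine (map_range_eq_tau_iff hn a4).2 ⟨by omega, fun j hj => ?_⟩
    have := blockTile_left (n := n) (hatT t) j
    rw [blockTile_hatT] at this
    exact this

theorem exists_seq (g : ℤ → ℤ) : ∃ A : ℤ → ℤ, A 0 = 0 ∧ ∀ l, A (l + 1) = A l + g l := by
  refine ⟨fun l => ∑ i ∈ Finset.Ico 0 l, g i - ∑ i ∈ Finset.Ico l 0, g i, by simp, fun l => ?_⟩
  beta_reduce
  rcases lt_or_ge l 0 with h | h
  · rw [Finset.Ico_eq_empty_of_le (show l + 1 ≤ 0 by omega), Finset.Ico_eq_empty_of_le h.le,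
      show Finset.Ico l 0 = insert l (Finset.Ico (l + 1) 0) by
        ext; simp only [Finset.mem_Ico, Finset.mem_insert]; omega,
      Finset.sum_insert (by simp)]
    simp only [Finset.sum_empty]
    ring
  · rw [Finset.Ico_eq_empty_of_le h, Finset.Ico_eq_empty_of_le (show 0 ≤ l + 1 by omega),
      show Finset.Ico 0 (l + 1) = insert l (Finset.Ico 0 l) by
        ext; simp only [Finset.mem_Ico, Finset.mem_insert]; omega,
      Finset.sum_insert (by simp)]
    ring

theorem exists_le_lt_succ {A : ℤ → ℤ} (hA : StrictMono A) (m : ℤ) :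
    ∃ l, A l ≤ m ∧ m < A (l + 1) := by
  have step : ∀ (k : ℕ) (l : ℤ), A l + k ≤ A (l + k) := fun k l => by
    induction k with
    | zero => simp
    | succ k ih =>
      have := hA (show l + k < l + (k + 1 : ℕ) by push_cast; omega)
      push_cast at this ⊢
      omega
  obtain ⟨l, h1, h2⟩ := Int.exists_greatest_of_bdd (P := fun l => A l ≤ m)
    ⟨0 + (m - A 0).toNat, fun l hl => by
      by_contra hc
      have := step (m - A 0).toNat 0
      have := hA (not_le.1 hc)
      omega⟩
    ⟨0 - (A 0 - m).toNat, by
      have := step (A 0 - m).toNat (0 - (A 0 - m).toNat)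
      rw [sub_add_cancel] at this
      change A _ ≤ m
      omega⟩
  refine ⟨l, h1, ?_⟩
  by_contra hc
  have := h2 (l + 1) (not_lt.1 hc)
  omega

theorem eq_of_between {A : ℤ → ℤ} (hA : StrictMono A) {m l l' : ℤ} (h1 : A l ≤ m)
    (h2 : m < A (l + 1)) (h3 : A l' ≤ m) (h4 : m < A (l' + 1)) : l = l' := by
  have := hA.lt_iff_lt.1 (h1.trans_lt h4)
  have := hA.lt_iff_lt.1 (h3.trans_lt h2)
  omega

section Image

variable {n : ℤ} {x y : ℤ × ℤ → WangTile Lbl} {A B : ℤ → ℤ}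

theorem ValidConfig.toText (hx : ValidConfig (Tmet n) x) : ValidConfig (Text n) x :=
  ⟨fun m => Tmet_subset_Text n (hx.1 m), hx.2⟩

theorem exists_isOmegaImage (hn : 1 ≤ n) (hx : ValidConfig (Tmet n) x) :
    ∃ (y : ℤ × ℤ → WangTile Lbl) (A B : ℤ → ℤ), A 0 = 0 ∧ B 0 = 0 ∧
      IsOmegaImage n (Tmet n) x y A B := by
  have hx' := hx.toText
  obtain ⟨A, A0, hA⟩ := exists_seq fun l => n + 1 - colType x l
  obtain ⟨B, B0, hB⟩ := exists_seq fun l => n + 1 - rowType x l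
  have mA : StrictMono A := strictMono_int_of_lt_succ fun l => by
    have := colType_bounds hx' l
    have := hA l
    omega
  have mB : StrictMono B := strictMono_int_of_lt_succ fun l => by
    have := rowType_bounds hx' l
    have := hB l
    omega
  choose L hL using exists_le_lt_succ mA
  choose K hK using exists_le_lt_succ mB
  choose p hp using fun m => exists_block hn (hx.1 m)
  refine ⟨fun m => p (L m.1, K m.2) (m.1 - A (L m.1)).toNat (m.2 - B (K m.2)).toNat, A, B, A0, B0,
    mA, mB, fun l1 l2 => ?_⟩
  have e : ∀ i j : ℕ, i < (A (l1 + 1) - A l1).toNat → j < (B (l2 + 1) - B l2).toNat →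
      BlockAt (fun m => p (L m.1, K m.2) (m.1 - A (L m.1)).toNat (m.2 - B (K m.2)).toNat)
        (A l1) (B l2) i j = p (l1, l2) i j := fun i j hi hj => by
    have e1 : L (A l1 + i) = l1 := eq_of_between mA (hL _).1 (hL _).2 (by omega) (by omega)
    have e2 : K (B l2 + j) = l2 := eq_of_between mB (hK _).1 (hK _).2 (by omega) (by omega)
    simp only [BlockAt, e1, e2, add_sub_cancel_left, Int.toNat_natCast]
  have hw := colType_bounds hx' l1
  have hh := rowType_bounds hx' l2
  have := hp (l1, l2)
  rw [bottom_fst hx', left_fst hx', show n + 1 - colType x l1 = A (l1 + 1) - A l1 by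
    rw [hA]; ring, show n + 1 - rowType x l2 = B (l2 + 1) - B l2 by rw [hB]; ring] at this
  have hw' := hA l1
  have hh' := hB l2
  obtain ⟨⟨h1, h2, h3⟩, h4, h5, h6, h7⟩ := this
  rw [← h4, ← h5, ← h6, ← h7]
  refine ⟨⟨fun i j hi hj => ?_, fun i j hi hj => ?_, fun i j hi hj => ?_⟩, ?_, ?_, ?_, ?_⟩
  · rw [e _ _ hi hj]
    exact h1 i j hi hj
  · rw [e _ _ (by omega) hj, e _ _ hi hj]
    exact h2 i j hi hj
  · rw [e _ _ hi (by omega), e _ _ hi hj]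
    exact h3 i j hi hj
  all_goals
    refine List.map_congr_left fun j hj => ?_
    rw [List.mem_range] at hj
    rw [e _ _ (by omega) (by omega)]

theorem IsOmegaImage.reflect (h : IsOmegaImage n (Tmet n) x y A B) :
    IsOmegaImage n (Tmet n) (reflect x) (reflect y) B A :=
  ⟨h.2.1, h.1, fun l1 l2 =>
    let ⟨⟨h1, h2, h3⟩, h4, h5, h6, h7⟩ := h.2.2 l2 l1
    ⟨⟨fun i j hi hj => hatT_mem_Tmet (h1 j i hj hi), fun i j hi hj => h3 j i hj hi,
      fun i j hi hj => h2 j i hj hi⟩, h5, h4, h7, h6⟩⟩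

theorem IsOmegaImage.right_eq_left (h : IsOmegaImage n (Tmet n) x y A B)
    (hx : ∀ m : ℤ × ℤ, (x m).right = (x (m.1 + 1, m.2)).left) (m : ℤ × ℤ) :
    (y m).right = (y (m.1 + 1, m.2)).left := by
  obtain ⟨mA, mB, h⟩ := h
  obtain ⟨l1, a1, a2⟩ := exists_le_lt_succ mA m.1
  obtain ⟨l2, b1, b2⟩ := exists_le_lt_succ mB m.2
  obtain ⟨⟨-, h2, -⟩, h4, -⟩ := h l1 l2
  obtain ⟨-, -, -, h6, -⟩ := h (l1 + 1) l2
  rw [← hx (l1, l2), ← h4] at h6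
  have h6 := List.map_inj_left.1 h6 (m.2 - B l2).toNat (List.mem_range.2 (by omega))
  simp only [BlockAt] at h2 h6
  have ej : B l2 + ((m.2 - B l2).toNat : ℤ) = m.2 := by omega
  rw [ej] at h6
  by_cases hc : m.1 + 1 < A (l1 + 1)
  · have := h2 (m.1 - A l1).toNat (m.2 - B l2).toNat (by omega) (by omega)
    rw [ej, show A l1 + ((m.1 - A l1).toNat : ℤ) = m.1 by omega,
      show A l1 + ((((m.1 - A l1).toNat + 1 : ℕ)) : ℤ) = m.1 + 1 by omega] at this
    exact this
  · rw [show A (l1 + 1) + ((0 : ℕ) : ℤ) = m.1 + 1 by omega,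
      show A l1 + (((A (l1 + 1) - A l1).toNat - 1 : ℕ) : ℤ) = m.1 by omega] at h6
    exact h6.symm

theorem IsOmegaImage.validConfig (h : IsOmegaImage n (Tmet n) x y A B)
    (hx : ValidConfig (Tmet n) x) : ValidConfig (Tmet n) y := by
  refine ⟨fun m => ?_, h.right_eq_left hx.2.1, fun m =>
    h.reflect.right_eq_left (fun m => hx.2.2 (m.2, m.1)) (m.2, m.1)⟩
  obtain ⟨mA, mB, h⟩ := h
  obtain ⟨l1, a1, a2⟩ := exists_le_lt_succ mA m.1
  obtain ⟨l2, b1, b2⟩ := exists_le_lt_succ mB m.2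
  have := (h l1 l2).1.1 (m.1 - A l1).toNat (m.2 - B l2).toNat (by omega) (by omega)
  rw [BlockAt, show A l1 + ((m.1 - A l1).toNat : ℤ) = m.1 by omega,
    show B l2 + ((m.2 - B l2).toNat : ℤ) = m.2 by omega] at this
  exact this

/-- The left half of the description of the images under `ω_n`, the other half being obtained by
reflection. -/
def LeftSpec (n : ℤ) (x y : ℤ × ℤ → WangTile Lbl) (A B : ℤ → ℤ) : Prop :=
  (∀ l, B (l + 1) = B l + (n + 1 - rowType x l)) ∧
    ∀ l1 l2 j, 0 ≤ j → j < n + 1 - rowType x l2 →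
      (y (A l1, B l2 + j)).left = tauLetter n (x (l1, l2)).left j

theorem LeftSpec.of_isOmegaImage (hn : 1 ≤ n) (hx : ValidConfig (Tmet n) x)
    (h : IsOmegaImage n (Tmet n) x y A B) : LeftSpec n x y A B := by
  have key : ∀ l1 l2, B (l2 + 1) = B l2 + (n + 1 - rowType x l2) ∧
      ∀ j, 0 ≤ j → j < n + 1 - rowType x l2 →
      (y (A l1, B l2 + j)).left = tauLetter n (x (l1, l2)).left j := fun l1 l2 => by
    have := h.2.1 (lt_add_one l2)
    obtain ⟨e1, e2⟩ := (map_range_eq_tau_iff hn (admissible_of_mem hn (hx.1 (l1, l2))).2.2.1).1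
      (h.2.2 l1 l2).2.2.2.1
    rw [left_fst hx.toText] at e1
    refine ⟨by omega, fun j h0 h1 => ?_⟩
    lift j to ℕ using h0
    rw [← e2 j (by omega), BlockAt, Nat.cast_zero, add_zero]
  exact ⟨fun l => (key 0 l).1, fun l1 l2 => (key l1 l2).2⟩

theorem LeftSpec.lt_succ (hx : ValidConfig (Tmet n) x) (hn : 1 ≤ n) (h : LeftSpec n x y A B)
    (l : ℤ) : B l < B (l + 1) := by
  have := rowType_bounds hx.toText l
  have := h.1 l
  omega

theorem LeftSpec.words (hn : 1 ≤ n) (hx : ValidConfig (Tmet n) x) (hy : ValidConfig (Tmet n) y)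
    (h : LeftSpec n x y A B) (hA : ∀ l, A l < A (l + 1)) (l1 l2 : ℤ) :
    rightWord (A (l1 + 1) - A l1).toNat (B (l2 + 1) - B l2).toNat
      (BlockAt y (A l1) (B l2)) = tau n (x (l1, l2)).right ∧
    leftWord (B (l2 + 1) - B l2).toNat (BlockAt y (A l1) (B l2)) = tau n (x (l1, l2)).left := by
  have key : ∀ l1, leftWord (B (l2 + 1) - B l2).toNat (BlockAt y (A l1) (B l2)) =
      tau n (x (l1, l2)).left := fun l1 => by
    have := h.1 l2
    have := h.lt_succ hx hn l2
    refine (map_range_eq_tau_iff hn (admissible_of_mem hn (hx.1 (l1, l2))).2.2.1).2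
      ⟨by rw [left_fst hx.toText]; omega, fun j hj => ?_⟩
    rw [← h.2 l1 l2 j (by omega) (by omega), BlockAt, Nat.cast_zero, add_zero]
  refine ⟨?_, key l1⟩
  rw [hx.2.1, ← key (l1 + 1)]
  refine List.map_congr_left fun j _ => ?_
  have := hA l1
  simp only [BlockAt]
  rw [hy.2.1, show A l1 + (((A (l1 + 1) - A l1).toNat - 1 : ℕ) : ℤ) + 1 = A (l1 + 1) by omega,
    Nat.cast_zero, add_zero]

theorem isOmegaImage_iff (hn : 1 ≤ n) (hx : ValidConfig (Tmet n) x) :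
    IsOmegaImage n (Tmet n) x y A B ↔ ValidConfig (Tmet n) y ∧ LeftSpec n x y A B ∧
      LeftSpec n (reflect x) (reflect y) B A := by
  have hr : ValidConfig (Tmet n) (reflect x) := hx.toText.reflect.tmet hn
  refine ⟨fun h => ⟨h.validConfig hx, .of_isOmegaImage hn hx h,
    .of_isOmegaImage hn hr h.reflect⟩, ?_⟩
  rintro ⟨hy, hB, hA⟩
  have hB' := hB.lt_succ hx hn
  have hA' := hA.lt_succ hr hn
  refine ⟨strictMono_int_of_lt_succ hA', strictMono_int_of_lt_succ hB', fun l1 l2 => ?_⟩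
  have h1 := hB.words hn hx hy hA' l1 l2
  have h2 := hA.words hn hr (hy.toText.reflect.tmet hn) hB' l2 l1
  refine ⟨⟨fun i j _ _ => hy.1 _, fun i j _ _ => ?_, fun i j _ _ => ?_⟩, h1.1, h2.1, h1.2, h2.2⟩
  · simp only [BlockAt]
    rw [hy.2.1, Nat.cast_add_one, ← add_assoc]
  · simp only [BlockAt]
    rw [hy.2.2, Nat.cast_add_one, ← add_assoc]

end Image

theorem exists_threshold {f : ℤ → ℤ} {N : ℤ} (hN : -1 ≤ N) (hf : ∀ j, 0 ≤ f j ∧ f j ≤ 1)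
    (hm : ∀ j, 0 < j → j ≤ N → f (j - 1) ≤ f j) :
    ∃ Z, 0 ≤ Z ∧ Z ≤ N + 1 ∧ ∀ j, 0 ≤ j → j ≤ N → f j = stepAt Z j := by
  induction N, hN using Int.leInduction with
  | base => exact ⟨0, by omega, by omega, fun j _ _ => by omega⟩
  | succ N hN ih =>
    obtain ⟨Z, h1, h2, h3⟩ := ih fun j h h' => hm j h (by omega)
    have hb := hf (N + 1)
    by_cases h : f (N + 1) = 0 ∧ Z = N + 1
    · refine ⟨N + 2, by omega, by omega, fun j hj hj' => ?_⟩
      have := h3 j hj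
      unfold stepAt at this ⊢
      by_cases hc : j = N + 1
      · rw [if_pos (by omega), hc, h.1]
      · rw [this (by omega), if_pos (by omega), if_pos (by omega)]
    · refine ⟨Z, h1, by omega, fun j hj hj' => ?_⟩
      by_cases hc : j = N + 1
      · unfold stepAt
        rw [hc, if_neg (by omega)]
        by_cases hz : Z = N + 1
        · omega
        · have e := h3 N (by omega) le_rfl
          have := hm (N + 1) (by omega) le_rfl
          rw [add_sub_cancel_right, e, stepAt, if_neg (by omega)] at this
          omega
      · exact h3 j hj (by omega)

theorem threshold_step {N u l l' Z Z' : ℤ} (hN : 0 ≤ N) (hu : 0 ≤ u ∧ u ≤ 1) (hl : 0 ≤ l ∧ l ≤ 1)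
    (hl' : u ≤ l' ∧ l' ≤ 1) (hZ : 0 ≤ Z ∧ Z ≤ N + 1) (hZ' : 0 ≤ Z' ∧ Z' ≤ N + 1)
    (h0 : stepAt Z' 0 = l - u)
    (hs : ∀ j, 1 ≤ j → j ≤ N → stepAt Z' j = stepAt Z (j - 1) + 1 - u) (hN' : stepAt Z N = l') :
    (u = 1 ∧ Z' = Z + 1 ∧ l = 1 ∧ l' = 1 ∧ Z ≤ N) ∨ (u = 0 ∧ Z = N + 1 - l' ∧ Z' = 1 - l) := by
  have c : ∀ Z j, j < Z ∧ stepAt Z j = 0 ∨ Z ≤ j ∧ stepAt Z j = 1 := fun Z j => by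
    unfold stepAt
    split_ifs <;> omega
  have c1 := c Z' 0
  have c2 := c Z N
  obtain rfl | rfl : u = 0 ∨ u = 1 := by omega
  · have h1 := hs 1
    have h2 := hs N
    have c3 := c Z' 1
    have c4 := c Z' N
    have c5 := c Z (N - 1)
    have c6 := c Z (1 - 1)
    omega
  · have h1 := hs Z
    have h2 := hs (Z + 1)
    have c3 := c Z' Z
    have c4 := c Z' (Z + 1)
    have c5 := c Z (Z - 1)
    have c6 := c Z (Z + 1 - 1)
    omega

/-- The type forced by the length of the interval `[A l, A (l + 1))`. -/
def gapType (n : ℤ) (A : ℤ → ℤ) (l : ℤ) : ℤ := n + 1 - (A (l + 1) - A l)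

section Desubstitution

variable {n : ℤ} {y : ℤ × ℤ → WangTile Lbl} {A B : ℤ → ℤ}

theorem exists_thresholds (hn : 1 ≤ n) (hy : ValidConfig (Text n) y)
    (hA : ∀ l, Consec (colType y) (A l) (A (l + 1)))
    (hB : ∀ l, Consec (rowType y) (B l) (B (l + 1))) :
    ∃ Z : ℤ → ℤ → ℤ, ∀ l1 l2, (0 ≤ Z l1 l2 ∧ Z l1 l2 ≤ n - gapType n B l2 + 1) ∧
      (∀ j, 0 ≤ j → j ≤ n - gapType n B l2 →
        upState y (A l1) (B l2 + j) = stepAt (Z l1 l2) j) ∧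
      ((gapType n A l1 = 1 ∧ Z (l1 + 1) l2 = Z l1 l2 + 1 ∧ upState y (A l1) (B l2 - 1) = 1 ∧
          upState y (A l1) (B (l2 + 1) - 1) = 1 ∧ Z l1 l2 ≤ n - gapType n B l2) ∨
        (gapType n A l1 = 0 ∧
          Z l1 l2 = n - gapType n B l2 + 1 - upState y (A l1) (B (l2 + 1) - 1) ∧
          Z (l1 + 1) l2 = 1 - upState y (A l1) (B l2 - 1))) ∧
      (Z l1 l2 = 0 → rightState y (A l1 - 1) (B l2) = 1) := by
  have gA : ∀ l, 0 ≤ gapType n A l ∧ gapType n A l ≤ 1 := fun l => by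
    have := consec_col_gap hn hy (hA l)
    unfold gapType
    omega
  have gB : ∀ l, 0 ≤ gapType n B l ∧ gapType n B l ≤ 1 := fun l => by
    have := consec_col_gap hn hy.reflect (hB l)
    unfold gapType
    omega
  have hZ : ∀ l1 l2, ∃ Z, 0 ≤ Z ∧ Z ≤ n - gapType n B l2 + 1 ∧ ∀ j, 0 ≤ j →
      j ≤ n - gapType n B l2 → upState y (A l1) (B l2 + j) = stepAt Z j := fun l1 l2 => by
    refine exists_threshold (by have := gB l2; omega)
      (fun j => upState_bounds hy (hA l1).2.1 _) fun j h h' => ?_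
    rw [← add_sub_assoc]
    exact upState_mono hn hy (hA l1).2.1
      ((hB l2).2.2.2 _ (by omega) (by unfold gapType at h'; omega))
  choose Z hZ0 hZ1 hZ using hZ
  refine ⟨Z, fun l1 l2 => ⟨⟨hZ0 l1 l2, hZ1 l1 l2⟩, hZ l1 l2, ?_, fun h => ?_⟩⟩
  · have st := upState_step hy (hA l1)
    have bA := upState_bounds hy (hA l1).2.1
    have bA' := upState_bounds hy (hA (l1 + 1)).2.1
    have gB2 := gB l2
    refine threshold_step (by omega) (gA l1) (bA _) ⟨?_, (bA _).2⟩
      ⟨hZ0 l1 l2, hZ1 l1 l2⟩ ⟨hZ0 (l1 + 1) l2, hZ1 (l1 + 1) l2⟩ ?_ (fun j hj hj' => ?_) ?_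
    · have := st (B (l2 + 1))
      rw [(hB (l2 + 1)).2.1] at this
      have := bA' (B (l2 + 1))
      unfold gapType
      omega
    · rw [← hZ (l1 + 1) l2 0 le_rfl (by omega), add_zero]
      have := st (B l2)
      rw [(hB l2).2.1] at this
      unfold gapType
      omega
    · rw [← hZ (l1 + 1) l2 j (by omega) hj', ← hZ l1 l2 (j - 1) (by omega) (by omega)]
      have := st (B l2 + j)
      rw [(hB l2).2.2.2 _ (by omega) (by unfold gapType at hj'; omega), add_sub_assoc] at this
      unfold gapType
      omega
    · rw [← hZ l1 l2 _ (by omega) le_rfl]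
      congr 1
      unfold gapType
      omega
  · have := (junction_le hy (hA l1).2.1 (hB l2).2.1).2
    have e := hZ l1 l2 0 le_rfl (by have := gB l2; omega)
    have := rightState_bounds hy (hB l2).2.1 (A l1 - 1)
    rw [add_zero, h, stepAt, if_neg (lt_irrefl _)] at e
    omega

/-- The left label of the tile whose image is the block of `y` with index `(l1, l2)`. -/
def parentLabel (n : ℤ) (y : ℤ × ℤ → WangTile Lbl) (A B : ℤ → ℤ) (Z : ℤ → ℤ → ℤ) (l1 l2 : ℤ) :
    Lbl :=
  (gapType n B l2, gapType n B l2 + 1 - rightState y (A l1 - 1) (B l2), gapType n B l2 + Z l1 l2)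

theorem left_eq_tauLetter (hy : ValidConfig (Text n) y) {Z : ℤ → ℤ → ℤ} {l1 l2 : ℤ}
    (hA : colType y (A l1) = 0) (hB : Consec (rowType y) (B l2) (B (l2 + 1)))
    (hZ : ∀ j, 0 ≤ j → j ≤ n - gapType n B l2 →
      upState y (A l1) (B l2 + j) = stepAt (Z l1 l2) j) {j : ℤ} (h0 : 0 ≤ j)
    (h1 : j < n + 1 - gapType n B l2) :
    (y (A l1, B l2 + j)).left = tauLetter n (parentLabel n y A B Z l1 l2) j := by
  have f := facts_of_mem_Text (hy.1 (A l1, B l2 + j))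
  have f3 := (f.2.2.2.2.2.1 (by rw [bottom_fst hy, hA])).1
  have f9 := f.2.2.2.2.2.2.2.2.1
  have f1 := left_fst hy (A l1) (B l2 + j)
  have e := hZ j h0 (by omega)
  unfold upState at e
  rw [e] at f3
  simp only [tauLetter, parentLabel, add_sub_cancel_left]
  split_ifs with hj
  · subst hj
    have f2 := left_snd hy (A l1) (B l2 + 0)
    rw [add_zero] at *
    rw [hB.2.1] at f1
    refine Prod.ext f1 (Prod.ext ?_ f3)
    simp only
    omega
  · rw [hB.2.2.2 _ (by omega) (by unfold gapType at h1; omega)] at f1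
    exact Prod.ext f1 (Prod.ext (f9 f1) f3)

theorem exists_desubstitution (hn : 1 ≤ n) (hy : ValidConfig (Tmet n) y) :
    ∃ (x : ℤ × ℤ → WangTile Lbl) (A B : ℤ → ℤ), ValidConfig (Tmet n) x ∧ LeftSpec n x y A B ∧
      LeftSpec n (reflect x) (reflect y) B A := by
  have hy := hy.toText
  obtain ⟨A, -, hA, -⟩ := exists_col_enum hn hy
  obtain ⟨B, -, hB, -⟩ := exists_col_enum hn hy.reflect
  obtain ⟨Z, hZ⟩ := exists_thresholds hn hy hA hB
  obtain ⟨W, hW⟩ := exists_thresholds hn hy.reflect hB hA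
  let lam := parentLabel n y A B Z
  let mu := parentLabel n (reflect y) B A W
  refine ⟨fun m => ⟨lam (m.1 + 1) m.2, mu (m.2 + 1) m.1, lam m.1 m.2, mu m.2 m.1⟩, A, B,
    ValidConfig.tmet hn ⟨fun m => ?_, fun m => rfl, fun m => rfl⟩,
    ⟨fun l => ?_, fun l1 l2 j h0 h1 =>
      left_eq_tauLetter hy (hA l1).2.1 (hB l2) (hZ l1 l2).2.1 h0 h1⟩,
    ⟨fun l => ?_, fun l1 l2 j h0 h1 =>
      left_eq_tauLetter hy.reflect (hB l1).2.1 (hA l2) (hW l1 l2).2.1 h0 h1⟩⟩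
  · obtain ⟨l1, l2⟩ := m
    obtain ⟨z1, -, z2, z3⟩ := hZ l1 l2
    obtain ⟨w1, -, w2, w3⟩ := hW l2 l1
    obtain ⟨-, -, -, z4⟩ := hZ (l1 + 1) l2
    obtain ⟨-, -, -, w4⟩ := hW (l2 + 1) l1
    have b1 := upState_bounds hy (hA l1).2.1 (B l2 - 1)
    have b2 := upState_bounds hy (hA l1).2.1 (B (l2 + 1) - 1)
    have hB0 : rowType y (B l2) = 0 := (hB l2).2.1
    have b3 := rightState_bounds hy hB0 (A l1 - 1)
    have b4 := rightState_bounds hy hB0 (A (l1 + 1) - 1)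
    change ((gapType n B l2 = 1 ∧ W (l2 + 1) l1 = W l2 l1 + 1 ∧ rightState y (A l1 - 1) (B l2) = 1 ∧
          rightState y (A (l1 + 1) - 1) (B l2) = 1 ∧ W l2 l1 ≤ n - gapType n A l1) ∨
        (gapType n B l2 = 0 ∧
          W l2 l1 = n - gapType n A l1 + 1 - rightState y (A (l1 + 1) - 1) (B l2) ∧
          W (l2 + 1) l1 = 1 - rightState y (A l1 - 1) (B l2))) at w2
    change W l2 l1 = 0 → upState y (A l1) (B l2 - 1) = 1 at w3
    change W (l2 + 1) l1 = 0 → upState y (A l1) (B (l2 + 1) - 1) = 1 at w4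
    change (⟨(gapType n B l2, gapType n B l2 + 1 - rightState y (A (l1 + 1) - 1) (B l2),
          gapType n B l2 + Z (l1 + 1) l2),
        (gapType n A l1, gapType n A l1 + 1 - upState y (A l1) (B (l2 + 1) - 1),
          gapType n A l1 + W (l2 + 1) l1),
        (gapType n B l2, gapType n B l2 + 1 - rightState y (A l1 - 1) (B l2),
          gapType n B l2 + Z l1 l2),
        (gapType n A l1, gapType n A l1 + 1 - upState y (A l1) (B l2 - 1),
          gapType n A l1 + W l2 l1)⟩ : WangTile Lbl) ∈ Text n
    generalize gapType n A l1 = u at *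
    generalize gapType n B l2 = v at *
    generalize upState y (A l1) (B l2 - 1) = l at *
    generalize upState y (A l1) (B (l2 + 1) - 1) = l' at *
    generalize rightState y (A l1 - 1) (B l2) = s at *
    generalize rightState y (A (l1 + 1) - 1) (B l2) = s' at *
    rw [mem_Text_iff]
    rcases z2 with ⟨rfl, e1, rfl, rfl, e2⟩ | ⟨rfl, e1, e2⟩ <;>
      rcases w2 with ⟨rfl, d1, rfl, rfl, d2⟩ | ⟨rfl, d1, d2⟩
    · refine Or.inl ⟨1 + Z l1 l2, 1 + W l2 l1, by omega, by omega, by omega, by omega, ?_⟩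
      simp only [WangTile.mk.injEq, Prod.mk.injEq]
      and_intros <;> first | trivial | omega
    · refine Or.inr (Or.inl ⟨1 - s, 1 - s', Z l1 l2, by omega, by omega, by omega, by omega,
        by omega, by omega, ?_⟩)
      simp only [WangTile.mk.injEq, Prod.mk.injEq]
      and_intros <;> first | trivial | omega
    · refine Or.inr (Or.inr (Or.inl ⟨1 - l, 1 - l', W l2 l1, by omega, by omega, by omega,
        by omega, by omega, by omega, ?_⟩))
      simp only [WangTile.mk.injEq, Prod.mk.injEq]
      and_intros <;> first | trivial | omega
    · refine Or.inr (Or.inr (Or.inr ⟨1 - s', 1 - l, 1 - l', 1 - s, by omega, by omega, by omega,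
        by omega, by omega, by omega, ?_⟩))
      simp only [junctionTile, WangTile.mk.injEq, Prod.mk.injEq]
      and_intros <;> first | trivial | omega
  · change _ = B l + (n + 1 - gapType n B l)
    unfold gapType
    ring
  · change _ = A l + (n + 1 - gapType n A l)
    unfold gapType
    ring

end Desubstitution

theorem LeftSpec.shift {n : ℤ} {x y : ℤ × ℤ → WangTile Lbl} {A B : ℤ → ℤ}
    (h : LeftSpec n x y A B) (a b : ℤ) :
    LeftSpec n x (fun m => y (m.1 - a, m.2 - b)) (fun l => A l + a) (fun l => B l + b) := by
  refine ⟨fun l => ?_, fun l1 l2 j h0 h1 => ?_⟩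
  · have := h.1 l
    beta_reduce
    omega
  · beta_reduce
    rw [← h.2 l1 l2 j h0 h1, add_sub_cancel_right,
      show B l2 + b + j - b = B l2 + j by ring]

theorem ValidConfig.shift {T : Set (WangTile Lbl)} {y : ℤ × ℤ → WangTile Lbl}
    (h : ValidConfig T y) (a b : ℤ) : ValidConfig T (fun m => y (m.1 - a, m.2 - b)) := by
  refine ⟨fun m => h.1 _, fun m => ?_, fun m => ?_⟩
  · rw [h.2.1, sub_add_eq_add_sub]
  · rw [h.2.2, sub_add_eq_add_sub]

theorem shift_neg_shift (y : ℤ × ℤ → WangTile Lbl) (a b : ℤ) :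
    (fun m : ℤ × ℤ => (fun m : ℤ × ℤ => y (m.1 - a, m.2 - b)) (m.1 - -a, m.2 - -b)) = y := by
  funext m
  simp

theorem eq_of_range_eq {A A' : ℤ → ℤ} (hA : StrictMono A) (hA' : StrictMono A')
    (h : ∀ a, (∃ l, A l = a) ↔ ∃ l, A' l = a) {m : ℤ} (h0 : A 0 ≤ m) (h1 : m < A 1)
    (h0' : A' 0 ≤ m) (h1' : m < A' 1) : A = A' := by
  have next : ∀ {A A' : ℤ → ℤ}, StrictMono A → StrictMono A' →
      (∀ a, (∃ l, A l = a) ↔ ∃ l, A' l = a) → ∀ l, A l = A' l → A (l + 1) ≤ A' (l + 1) := by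
    intro A A' hA hA' h l e
    obtain ⟨k, hk⟩ := (h (A' (l + 1))).2 ⟨_, rfl⟩
    rw [← hk]
    have := hA.lt_iff_lt.1 (show A l < A k by rw [hk, e]; exact hA' (lt_add_one l))
    exact hA.monotone this
  have prev : ∀ {A A' : ℤ → ℤ}, StrictMono A → StrictMono A' →
      (∀ a, (∃ l, A l = a) ↔ ∃ l, A' l = a) → ∀ l, A l = A' l → A' (l - 1) ≤ A (l - 1) := by
    intro A A' hA hA' h l e
    obtain ⟨k, hk⟩ := (h (A' (l - 1))).2 ⟨_, rfl⟩
    rw [← hk]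
    have := hA.lt_iff_lt.1 (show A k < A l by rw [hk, e]; exact hA' (sub_one_lt l))
    exact hA.monotone (by omega)
  have zero : ∀ {A A' : ℤ → ℤ}, StrictMono A → (∀ a, (∃ l, A l = a) ↔ ∃ l, A' l = a) →
      A' 0 ≤ m → m < A 1 → A' 0 ≤ A 0 := by
    intro A A' hA h h0' h1
    obtain ⟨k, hk⟩ := (h (A' 0)).2 ⟨_, rfl⟩
    rw [← hk] at h0' ⊢
    have := hA.lt_iff_lt.1 (h0'.trans_lt h1)
    exact hA.monotone (by omega)
  have h' := fun a => (h a).symm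
  funext l
  induction l using Int.induction_on with
  | zero => exact (zero hA' h' h0 h1').antisymm (zero hA h h0' h1)
  | succ l ih => exact (next hA hA' h _ ih).antisymm (next hA' hA h' _ ih.symm)
  | pred l ih => exact (prev hA' hA h' _ ih.symm).antisymm (prev hA hA' h _ ih)

section Recognizability

variable {n : ℤ} {x x' y : ℤ × ℤ → WangTile Lbl} {A B A' B' : ℤ → ℤ}

theorem LeftSpec.rowType_eq_zero_iff (hn : 1 ≤ n) (hx : ValidConfig (Tmet n) x)
    (hy : ValidConfig (Tmet n) y) (h : LeftSpec n x y A B) (b : ℤ) :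
    (∃ l, B l = b) ↔ rowType y b = 0 := by
  have mB := strictMono_int_of_lt_succ (h.lt_succ hx hn)
  have key : ∀ l j, 0 ≤ j → j < n + 1 - rowType x l →
      rowType y (B l + j) = if j = 0 then 0 else 1 := fun l j h0 h1 => by
    rw [← left_fst hy.toText (A 0), h.2 0 l j h0 h1, tauLetter]
    split_ifs <;> rfl
  constructor
  · rintro ⟨l, rfl⟩
    have := key l 0 le_rfl (by have := rowType_bounds hx.toText l; omega)
    rwa [add_zero, if_pos rfl] at this
  · intro hb
    obtain ⟨l, h0, h1⟩ := exists_le_lt_succ mB b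
    have := key l (b - B l) (by omega) (by rw [h.1] at h1; omega)
    rw [add_sub_cancel, hb] at this
    refine ⟨l, ?_⟩
    split_ifs at this <;> omega

theorem LeftSpec.eq_of_mem (hn : 1 ≤ n) (hx : ValidConfig (Tmet n) x)
    (hx' : ValidConfig (Tmet n) x') (hy : ValidConfig (Tmet n) y) (h : LeftSpec n x y A B)
    (h' : LeftSpec n x' y A' B') {m : ℤ} (h0 : B 0 ≤ m)
    (h1 : m < B 0 + (n + 1 - rowType x 0)) (h0' : B' 0 ≤ m)
    (h1' : m < B' 0 + (n + 1 - rowType x' 0)) : B = B' := by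
  rw [← h.1] at h1
  rw [← h'.1] at h1'
  exact eq_of_range_eq (strictMono_int_of_lt_succ (h.lt_succ hx hn))
    (strictMono_int_of_lt_succ (h'.lt_succ hx' hn))
    (fun b => (h.rowType_eq_zero_iff hn hx hy b).trans (h'.rowType_eq_zero_iff hn hx' hy b).symm)
    h0 h1 h0' h1'

theorem LeftSpec.left_eq (hn : 1 ≤ n) (hx : ValidConfig (Tmet n) x)
    (hx' : ValidConfig (Tmet n) x') (hy : ValidConfig (Tmet n) y) (hA : ∀ l, A l < A (l + 1))
    (h : LeftSpec n x y A B) (h' : LeftSpec n x' y A B) (m : ℤ × ℤ) :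
    (x m).left = (x' m).left :=
  tau_injective hn (admissible_of_mem hn (hx.1 m)).2.2.1 (admissible_of_mem hn (hx'.1 m)).2.2.1
    ((h.words hn hx hy hA m.1 m.2).2.symm.trans (h'.words hn hx' hy hA m.1 m.2).2)

theorem LeftSpec.parent_eq (hn : 1 ≤ n) (hx : ValidConfig (Tmet n) x)
    (hx' : ValidConfig (Tmet n) x') (hy : ValidConfig (Tmet n) y)
    (h : LeftSpec n x y A B) (h' : LeftSpec n x' y A B)
    (hr : LeftSpec n (reflect x) (reflect y) B A)
    (hr' : LeftSpec n (reflect x') (reflect y) B A) : x = x' := by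
  have rx := hx.toText.reflect.tmet hn
  have e1 := h.left_eq hn hx hx' hy (hr.lt_succ rx hn) h'
  have e2 : ∀ m, (x m).bottom = (x' m).bottom := fun m =>
    hr.left_eq hn rx (hx'.toText.reflect.tmet hn)
    (hy.toText.reflect.tmet hn) (h.lt_succ hx hn) hr' (m.2, m.1)
  have e3 := fun m => (hx.2.1 m).trans ((e1 _).trans (hx'.2.1 m).symm)
  have e4 := fun m => (hx.2.2 m).trans ((e2 _).trans (hx'.2.2 m).symm)
  funext m
  have e1 := e1 m
  have e2 := e2 m
  have e3 := e3 m
  have e4 := e4 m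
  generalize x m = t at *
  generalize x' m = t' at *
  cases t
  cases t'
  exact WangTile.mk.injEq .. ▸ ⟨e3, e4, e1, e2⟩

end Recognizability

/-- the substitution `ω_n` maps `Ω_n` into `Ω_n`, is onto up to a shift
(so `Ω_n` is self-similar), and is recognizable in `Ω_n`. -/
theorem stmt15 (n : ℤ) (hn : 1 ≤ n) :
    (∀ x : ℤ × ℤ → WangTile Lbl, ValidConfig (Tmet n) x →
      (∃ (y : ℤ × ℤ → WangTile Lbl) (A B : ℤ → ℤ), A 0 = 0 ∧ B 0 = 0 ∧
        IsOmegaImage n (Tmet n) x y A B) ∧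
      (∀ (y : ℤ × ℤ → WangTile Lbl) (A B : ℤ → ℤ), A 0 = 0 → B 0 = 0 →
        IsOmegaImage n (Tmet n) x y A B → ValidConfig (Tmet n) y)) ∧
    (∀ y : ℤ × ℤ → WangTile Lbl, ValidConfig (Tmet n) y ↔
      ∃ (x : ℤ × ℤ → WangTile Lbl) (k : ℤ × ℤ) (A B : ℤ → ℤ),
        ValidConfig (Tmet n) x ∧ A 0 = 0 ∧ B 0 = 0 ∧
        IsOmegaImage n (Tmet n) x (fun m : ℤ × ℤ => y (m.1 - k.1, m.2 - k.2)) A B) ∧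
    (∀ (x x' : ℤ × ℤ → WangTile Lbl) (k k' : ℤ × ℤ),
      ValidConfig (Tmet n) x → ValidConfig (Tmet n) x' →
      0 ≤ k.1 → k.1 < ((tau n (x (0, 0)).bottom).length : ℤ) →
      0 ≤ k.2 → k.2 < ((tau n (x (0, 0)).left).length : ℤ) →
      0 ≤ k'.1 → k'.1 < ((tau n (x' (0, 0)).bottom).length : ℤ) →
      0 ≤ k'.2 → k'.2 < ((tau n (x' (0, 0)).left).length : ℤ) →
      ∀ (y : ℤ × ℤ → WangTile Lbl) (A B A' B' : ℤ → ℤ),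
        A 0 = 0 → B 0 = 0 → A' 0 = 0 → B' 0 = 0 →
        IsOmegaImage n (Tmet n) x (fun m : ℤ × ℤ => y (m.1 - k.1, m.2 - k.2)) A B →
        IsOmegaImage n (Tmet n) x' (fun m : ℤ × ℤ => y (m.1 - k'.1, m.2 - k'.2)) A' B' →
        x = x' ∧ k = k') := by
  refine ⟨fun x hx => ⟨exists_isOmegaImage hn hx, fun y A B _ _ h => h.validConfig hx⟩,
    fun y => ⟨fun hy => ?_, ?_⟩, ?_⟩
  · obtain ⟨x, A, B, hx, h, hr⟩ := exists_desubstitution hn hy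
    exact ⟨x, (-A 0, -B 0), _, _, hx, by simp, by simp, (isOmegaImage_iff hn hx).2
      ⟨hy.shift _ _, h.shift (-A 0) (-B 0), hr.shift (-B 0) (-A 0)⟩⟩
  · rintro ⟨x, k, A, B, hx, -, -, h⟩
    have := (h.validConfig hx).shift (-k.1) (-k.2)
    rwa [shift_neg_shift] at this
  · intro x x' k k' hx hx' a1 a2 a3 a4 b1 b2 b3 b4 y A B A' B' hA hB hA' hB' h h'
    have unshift : ∀ {x : ℤ × ℤ → WangTile Lbl} {k : ℤ × ℤ} {A B : ℤ → ℤ},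
        ValidConfig (Tmet n) x →
        IsOmegaImage n (Tmet n) x (fun m : ℤ × ℤ => y (m.1 - k.1, m.2 - k.2)) A B →
        ValidConfig (Tmet n) y ∧ LeftSpec n x y (fun l => A l + -k.1) (fun l => B l + -k.2) ∧
        LeftSpec n (reflect x) (reflect y) (fun l => B l + -k.2) (fun l => A l + -k.1) := by
      intro x k A B hx h
      obtain ⟨hy, h1, h2⟩ := (isOmegaImage_iff hn hx).1 h
      have hy := hy.shift (-k.1) (-k.2)
      have h1 := h1.shift (-k.1) (-k.2)
      have h2 := h2.shift (-k.2) (-k.1)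
      rw [shift_neg_shift] at hy h1
      exact ⟨hy, h1, (congrArg reflect (shift_neg_shift y k.1 k.2)) ▸ h2⟩
    have len : ∀ {x : ℤ × ℤ → WangTile Lbl}, ValidConfig (Tmet n) x →
        ((tau n (x (0, 0)).bottom).length : ℤ) = n + 1 - colType x 0 ∧
        ((tau n (x (0, 0)).left).length : ℤ) = n + 1 - rowType x 0 := fun hx =>
      have := admissible_of_mem hn (hx.1 (0, 0))
      ⟨length_tau hn this.2.2.2, length_tau hn this.2.2.1⟩
    rw [(len hx).1] at a2
    rw [(len hx).2] at a4
    rw [(len hx').1] at b2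
    rw [(len hx').2] at b4
    obtain ⟨hy, h1, h2⟩ := unshift hx h
    obtain ⟨-, h1', h2'⟩ := unshift hx' h'
    have eB := h1.eq_of_mem hn hx hx' hy h1' (m := 0) (by omega) (by omega) (by omega) (by omega)
    have eA := h2.eq_of_mem hn (hx.toText.reflect.tmet hn) (hx'.toText.reflect.tmet hn)
      (hy.toText.reflect.tmet hn) h2' (m := 0) (by omega)
      (show 0 < A 0 + -k.1 + (n + 1 - colType x 0) by omega) (by omega)
      (show 0 < A' 0 + -k'.1 + (n + 1 - colType x' 0) by omega)
    rw [← eB, ← eA] at h1' h2'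
    refine ⟨h1.parent_eq hn hx hx' hy h1' h2 h2', Prod.ext ?_ ?_⟩
    · have := congrFun eA 0
      simp only [hA, hA'] at this
      omega
    · have := congrFun eB 0
      simp only [hB, hB'] at this
      omega
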